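/- arXiv:2402.10199 — 9 statements merged into one kernel-verified Lean document; each statement's English description precedes it below -/
import Mathlib

section
/- Let (X, σ_X) be a one-sided subshift with the weak specification property and 𝓕 = {log f_n} a sequence of continuous functions on X satisfying f_{n+m}(x) ≤ e^C f_n(x) f_m(σ_X^n x) for some C > 0 and all x ∈ X, n, m ∈ ℕ. Define f̲(x) := liminf_{n→∞} log(f_n(x)/f_{n-1}(σ_X x)), valued in [−∞, ∞). Then f̲ is bounded above (by C + max_{x∈X} log f_1(x)), and for every x ∈ X and k ∈ ℕ one has Σ_{i=0}^{k-1} f̲(σ_X^i x) ≤ C + log f_k(x) (sum taken in the extended reals); equivalently f_k(x)/e^{(S_k f̲)(x)} ≥ e^{−C}. -/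
open MeasureTheory Filter Topology

noncomputable section

/-- The one-sided shift map. -/
def shift {A : Type*} : (ℕ → A) → ℕ → A := fun x i => x (i + 1)

/-- A finite word appears in some point of `X`. -/
def AppearsIn {A : Type*} (X : Set (ℕ → A)) (w : List A) : Prop :=
  ∃ x ∈ X, ∃ m : ℕ, ∀ i : Fin w.length, x (m + i) = w.get i

/-- `X` is a (one-sided) subshift: a closed, shift-invariant set. -/
def IsSubshift {A : Type*} [TopologicalSpace A] (X : Set (ℕ → A)) : Prop :=
  IsClosed X ∧ shift '' X ⊆ X

/-- The weak specification property. -/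
def WeakSpec {A : Type*} (X : Set (ℕ → A)) : Prop :=
  ∃ p : ℕ, ∀ u v : List A, AppearsIn X u → AppearsIn X v →
    ∃ w : List A, w.length ≤ p ∧ AppearsIn X (u ++ w ++ v)

/-- The cylinder set `[x_1 … x_n]` inside `X`. -/
def cyl {A : Type*} (X : Set (ℕ → A)) (x : ℕ → A) (n : ℕ) : Set (ℕ → A) :=
  {z ∈ X | ∀ i < n, z i = x i}

/-- Birkhoff sum `(S_n g)(x)`. -/
def birk {A : Type*} (g : (ℕ → A) → ℝ) (n : ℕ) (x : ℕ → A) : ℝ :=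
  ∑ i ∈ Finset.range n, g (shift^[i] x)

/-- `μ` is a shift-invariant Borel probability measure concentrated on `X`,
i.e. an element of `M(X, σ_X)`. -/
def IsInvariantOn {A : Type*} [MeasurableSpace A] (μ : Measure (ℕ → A))
    (X : Set (ℕ → A)) : Prop :=
  IsProbabilityMeasure μ ∧ μ X = 1 ∧
    ∀ B : Set (ℕ → A), MeasurableSet B → μ (shift ⁻¹' B) = μ B

/-- `μ` is a Gibbs measure for the sequence `𝓕 = {log f_n}`. -/
def GibbsSeq {A : Type*} [MeasurableSpace A] (X : Set (ℕ → A))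
    (f : ℕ → (ℕ → A) → ℝ) (μ : Measure (ℕ → A)) : Prop :=
  ∃ P C : ℝ, 0 < C ∧ ∀ x ∈ X, ∀ n : ℕ, 1 ≤ n →
    C⁻¹ ≤ (μ (cyl X x n)).toReal / (Real.exp (-(n : ℝ) * P) * f n x) ∧
    (μ (cyl X x n)).toReal / (Real.exp (-(n : ℝ) * P) * f n x) ≤ C

/-- `μ` is a weak Gibbs measure for the sequence `𝓕 = {log f_n}`. -/
def WeakGibbsSeq {A : Type*} [MeasurableSpace A] (X : Set (ℕ → A))
    (f : ℕ → (ℕ → A) → ℝ) (μ : Measure (ℕ → A)) : Prop :=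
  ∃ P : ℝ, ∃ C : ℕ → ℝ, (∀ n : ℕ, 1 ≤ n → 0 < C n) ∧
    Tendsto (fun n : ℕ => Real.log (C n) / n) atTop (𝓝 0) ∧
    ∀ x ∈ X, ∀ n : ℕ, 1 ≤ n →
      (C n)⁻¹ ≤ (μ (cyl X x n)).toReal / (Real.exp (-(n : ℝ) * P) * f n x) ∧
      (μ (cyl X x n)).toReal / (Real.exp (-(n : ℝ) * P) * f n x) ≤ C n

/-- `μ` is a Gibbs measure for the (Borel measurable) function `g`. -/
def GibbsFun {A : Type*} [MeasurableSpace A] (X : Set (ℕ → A))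
    (g : (ℕ → A) → ℝ) (μ : Measure (ℕ → A)) : Prop :=
  GibbsSeq X (fun n x => Real.exp (birk g n x)) μ

/-- `μ` is a weak Gibbs measure for the (Borel measurable) function `g`. -/
def WeakGibbsFun {A : Type*} [MeasurableSpace A] (X : Set (ℕ → A))
    (g : (ℕ → A) → ℝ) (μ : Measure (ℕ → A)) : Prop :=
  WeakGibbsSeq X (fun n x => Real.exp (birk g n x)) μ

/-- Lemma `prego1` (i): for a sequence satisfying the subadditivity-type
bound, `f̲ = liminf log (f_n / f_{n-1} ∘ σ)` is bounded above by `C + max_{x ∈ X} log f_1`,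
and `(S_k f̲)(x) ≤ C + log f_k(x)` (in the extended reals). -/
theorem stmt_2 {k : ℕ} (X : Set (ℕ → Fin k))
    (hX : IsSubshift X) (hspec : WeakSpec X)
    (f : ℕ → (ℕ → Fin k) → ℝ)
    (hfc : ∀ n : ℕ, 1 ≤ n → ContinuousOn (f n) X)
    (hfpos : ∀ n : ℕ, 1 ≤ n → ∀ x ∈ X, 0 < f n x)
    (C : ℝ) (hC : 0 < C)
    (hsub : ∀ x ∈ X, ∀ n m : ℕ, 1 ≤ n → 1 ≤ m →
      f (n + m) x ≤ Real.exp C * (f n x * f m (shift^[n] x)))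
    (flow : (ℕ → Fin k) → EReal)
    (hflow : ∀ x ∈ X,
      flow x = Filter.liminf
        (fun n : ℕ => ((Real.log (f (n + 2) x / f (n + 1) (shift x))) : EReal)) atTop) :
    (∀ x ∈ X, flow x ≤ ((C + sSup ((fun z => Real.log (f 1 z)) '' X) : ℝ) : EReal)) ∧
    (∀ x ∈ X, ∀ m : ℕ, 1 ≤ m →
      ∑ i ∈ Finset.range m, flow (shift^[i] x) ≤ ((C + Real.log (f m x) : ℝ) : EReal)) := by
  have hsh : ∀ x ∈ X, shift x ∈ X := fun x hx => hX.2 ⟨x, hx, rfl⟩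
  have hit : ∀ m, ∀ x ∈ X, shift^[m] x ∈ X := by
    intro m
    induction m with
    | zero => intro x hx; simpa using hx
    | succ m ih => intro x hx; rw [Function.iterate_succ_apply]; exact ih _ (hsh x hx)
  have hlog : ∀ x ∈ X, ∀ m n : ℕ, 1 ≤ m →
      Real.log (f (n + 1 + m) x) - Real.log (f (n + 1) (shift^[m] x)) ≤ C + Real.log (f m x) := by
    intro x hx m n hm
    have h := hsub x hx m (n+1) hm (by omega)
    have p1 := hfpos m hm x hx
    have p2 := hfpos (n+1) (by omega) _ (hit m x hx)
    have p3 := hfpos (m+(n+1)) (by omega) x hx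
    have h2 := Real.log_le_log p3 h
    rw [Real.log_mul (Real.exp_pos C).ne' (mul_pos p1 p2).ne', Real.log_mul p1.ne' p2.ne',
      Real.log_exp] at h2
    rw [show n + 1 + m = m + (n+1) by omega]
    linarith
  have hfl : ∀ x ∈ X, flow x = Filter.liminf
        (fun n : ℕ => ((Real.log (f (n + 1 + 1) x) - Real.log (f (n + 1) (shift x)) : ℝ) : EReal))
        atTop := by
    intro x hx
    rw [hflow x hx]
    congr 1
    funext n
    rw [Real.log_div (hfpos (n+2) (by omega) x hx).ne' (hfpos (n+1) (by omega) _ (hsh x hx)).ne']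
  have hb1 : ∀ x ∈ X, flow x ≤ ((C + Real.log (f 1 x) : ℝ) : EReal) := by
    intro x hx
    rw [hfl x hx]
    refine (Filter.liminf_le_liminf (v := fun _ : ℕ => ((C + Real.log (f 1 x) : ℝ) : EReal))
      (Eventually.of_forall fun n => ?_)).trans (Filter.liminf_const _).le
    exact EReal.coe_le_coe_iff.2 (by simpa using hlog x hx 1 n le_rfl)
  have htop : ∀ x ∈ X, flow x ≠ ⊤ := fun x hx h => by
    have := hb1 x hx
    rw [h] at this
    exact EReal.coe_ne_top _ (top_le_iff.1 this)
  have key : ∀ m : ℕ, ∀ x ∈ X, ∑ i ∈ Finset.range (m+1), flow (shift^[i] x) ≤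
      Filter.liminf (fun n : ℕ =>
        ((Real.log (f (n + 1 + (m + 1)) x) - Real.log (f (n + 1) (shift^[m+1] x)) : ℝ) : EReal))
        atTop := by
    intro m
    induction m with
    | zero => intro x hx; simpa using (hfl x hx).le
    | succ m ih =>
      intro x hx
      rw [Finset.sum_range_succ']
      have h1 := ih (shift x) (hsh x hx)
      have h0 : flow x = Filter.liminf (fun n : ℕ =>
          ((Real.log (f (n + (m+1) + 1 + 1) x) - Real.log (f (n + (m+1) + 1) (shift x)) : ℝ)
            : EReal)) atTop := by
        rw [hfl x hx]
        exact (Filter.liminf_nat_add (fun n : ℕ =>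
          ((Real.log (f (n + 1 + 1) x) - Real.log (f (n + 1) (shift x)) : ℝ) : EReal)) (m+1)).symm
      simp only [Function.iterate_succ_apply, Function.iterate_zero, id] at h1 ⊢
      refine (add_le_add h1 h0.le).trans ?_
      refine EReal.le_liminf_add.trans ?_
      · refine Filter.liminf_le_liminf (Eventually.of_forall fun n => ?_)
        simp only [Pi.add_apply]
        rw [← EReal.coe_add, EReal.coe_le_coe_iff, show n + 1 + (m+1) = n + (m+1) + 1 by omega,
          show n + 1 + (m+1+1) = n + (m+1) + 1 + 1 by omega]
        linarith
  refine ⟨fun x hx => (hb1 x hx).trans (EReal.coe_le_coe_iff.2 ?_), fun x hx m hm => ?_⟩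
  · have hc : IsCompact X := hX.1.isCompact
    have hcl : ContinuousOn (fun z => Real.log (f 1 z)) X :=
      (hfc 1 le_rfl).log fun z hz => (hfpos 1 le_rfl z hz).ne'
    have := le_csSup (hc.bddAbove_image hcl) (Set.mem_image_of_mem _ hx)
    linarith
  · obtain ⟨m, rfl⟩ : ∃ j, m = j + 1 := ⟨m - 1, by omega⟩
    refine (key m x hx).trans ?_
    refine (Filter.liminf_le_liminf (v := fun _ : ℕ => ((C + Real.log (f (m+1) x) : ℝ) : EReal))
      (Eventually.of_forall fun n => ?_)).trans (Filter.liminf_const _).le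
    exact EReal.coe_le_coe_iff.2 (hlog x hx (m+1) n hm)
end
end

section
/- Let (X, σ_X) be a one-sided subshift with the weak specification property and 𝓕 = {log f_n} a sequence of continuous functions on X satisfying f_{n+m}(x) ≥ e^{−C} f_n(x) f_m(σ_X^n x) for some C > 0 and all x ∈ X, n, m ∈ ℕ. Define f̄(x) := limsup_{n→∞} log(f_n(x)/f_{n-1}(σ_X x)), valued in (−∞, ∞]. Then f̄ is bounded below (by −C + min_{x∈X} log f_1(x)), and for every x ∈ X and k ∈ ℕ one has Σ_{i=0}^{k-1} f̄(σ_X^i x) ≥ −C + log f_k(x) (sum taken in the extended reals); equivalently f_k(x)/e^{(S_k f̄)(x)} ≤ e^{C}. -/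
open MeasureTheory Filter Topology

noncomputable section

/-- Lemma `prego1` (ii): for a sequence satisfying the
superadditivity-type bound, `f̄ = limsup log (f_n / f_{n-1} ∘ σ)` is bounded below by
`−C + min_{x ∈ X} log f_1`, and `(S_k f̄)(x) ≥ −C + log f_k(x)` (in the extended reals). -/
theorem stmt_3 {k : ℕ} (X : Set (ℕ → Fin k))
    (hX : IsSubshift X) (hspec : WeakSpec X)
    (f : ℕ → (ℕ → Fin k) → ℝ)
    (hfc : ∀ n : ℕ, 1 ≤ n → ContinuousOn (f n) X)
    (hfpos : ∀ n : ℕ, 1 ≤ n → ∀ x ∈ X, 0 < f n x)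
    (C : ℝ) (hC : 0 < C)
    (hsup : ∀ x ∈ X, ∀ n m : ℕ, 1 ≤ n → 1 ≤ m →
      Real.exp (-C) * (f n x * f m (shift^[n] x)) ≤ f (n + m) x)
    (fupp : (ℕ → Fin k) → EReal)
    (hfupp : ∀ x ∈ X,
      fupp x = Filter.limsup
        (fun n : ℕ => ((Real.log (f (n + 2) x / f (n + 1) (shift x))) : EReal)) atTop) :
    (∀ x ∈ X, ((-C + sInf ((fun z => Real.log (f 1 z)) '' X) : ℝ) : EReal) ≤ fupp x) ∧
    (∀ x ∈ X, ∀ m : ℕ, 1 ≤ m →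
      ((-C + Real.log (f m x) : ℝ) : EReal) ≤ ∑ i ∈ Finset.range m, fupp (shift^[i] x)) := by
  have hsh : ∀ i : ℕ, ∀ x ∈ X, shift^[i] x ∈ X := by
    intro i
    induction i with
    | zero => intro x hx; simpa using hx
    | succ i ih =>
      intro x hx
      rw [Function.iterate_succ_apply]
      exact ih _ (hX.2 ⟨x, hx, rfl⟩)
  have key : ∀ x ∈ X, ∀ m : ℕ, 1 ≤ m → ∀ n : ℕ,
      -C + Real.log (f m x) ≤ Real.log (f (n + m + 1) x) - Real.log (f (n + 1) (shift^[m] x)) := by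
    intro x hx m hm n
    have h := hsup x hx m (n + 1) hm (by omega)
    have h1 := hfpos m hm x hx
    have h2 := hfpos (n + 1) (by omega) _ (hsh m x hx)
    have h3 := Real.log_le_log (by positivity) h
    rw [Real.log_mul (by positivity) (by positivity), Real.log_mul h1.ne' h2.ne',
      Real.log_exp, show m + (n + 1) = n + m + 1 by omega] at h3
    linarith
  have hfu : ∀ x ∈ X, fupp x = Filter.limsup
      (fun n : ℕ => ((Real.log (f (n + 1 + 1) x) - Real.log (f (n + 1) (shift^[1] x)) : ℝ) : EReal))
      atTop := by
    intro x hx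
    rw [hfupp x hx]
    congr 1
    funext n
    have h2 := hfpos (n + 1) (by omega) _ (hsh 1 x hx)
    have h3 := hfpos (n + 2) (by omega) _ hx
    rw [Real.log_div h3.ne' (by simpa using h2.ne')]
    rfl
  have low : ∀ x ∈ X, ∀ m : ℕ, 1 ≤ m → ((-C + Real.log (f m x) : ℝ) : EReal) ≤ Filter.limsup
      (fun n : ℕ => ((Real.log (f (n + m + 1) x) - Real.log (f (n + 1) (shift^[m] x)) : ℝ) : EReal))
      atTop := by
    intro x hx m hm
    apply Filter.le_limsup_of_frequently_le
    · apply Filter.Eventually.frequently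
      filter_upwards with n
      exact EReal.coe_le_coe_iff.2 (key x hx m hm n)
    · isBoundedDefault
  have lowf : ∀ x ∈ X, ((-C + Real.log (f 1 x) : ℝ) : EReal) ≤ fupp x := by
    intro x hx
    rw [hfu x hx]
    exact low x hx 1 le_rfl
  refine ⟨?_, ?_⟩
  · intro x hx
    refine le_trans (EReal.coe_le_coe_iff.2 ?_) (lowf x hx)
    have hb : BddBelow ((fun z => Real.log (f 1 z)) '' X) := by
      apply IsCompact.bddBelow
      apply hX.1.isCompact.image_of_continuousOn
      exact (hfc 1 le_rfl).log (fun z hz => (hfpos 1 le_rfl z hz).ne')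
    have := csInf_le hb ⟨x, hx, rfl⟩
    simp only at this
    linarith
  · have up : ∀ x ∈ X, ∀ m : ℕ, Filter.limsup
      (fun n : ℕ => ((Real.log (f (n + m + 1) x) - Real.log (f (n + 1) (shift^[m] x)) : ℝ) : EReal))
      atTop ≤ ∑ i ∈ Finset.range m, fupp (shift^[i] x) := by
      intro x hx m
      induction m with
      | zero => simp
      | succ m ih =>
        rw [Finset.sum_range_succ]
        refine le_trans ?_ (add_le_add_left ih _)
        have hy := hsh m x hx
        set u : ℕ → EReal := fun n : ℕ =>
          ((Real.log (f (n + m + 1) x) - Real.log (f (n + 1) (shift^[m] x)) : ℝ) : EReal) with hu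
        have hub : Filter.limsup u atTop ≠ ⊥ := by
          rcases Nat.eq_zero_or_pos m with h0 | h0
          · subst h0
            simp [hu]
          · exact ((EReal.bot_lt_coe _).trans_le (low x hx m h0)).ne'
        have hfb : fupp (shift^[m] x) ≠ ⊥ := ((EReal.bot_lt_coe _).trans_le (lowf _ hy)).ne'
        rw [← Filter.limsup_nat_add u 1] at hub ⊢
        rw [hfu _ hy] at hfb ⊢
        refine le_trans (le_of_eq ?_) (EReal.limsup_add_le (Or.inl hub) (Or.inr hfb))
        congr 1
        funext n
        simp only [hu, Pi.add_apply]
        rw [← EReal.coe_add, ← Function.iterate_add_apply]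
        congr 1
        rw [show n + 1 + m + 1 = n + (m + 1) + 1 by omega, show 1 + m = m + 1 by omega]
        ring
    intro x hx m hm
    exact (low x hx m hm).trans (up x hx m)
end
end

section
/- Let (X, σ_X) be a one-sided subshift with the weak specification property and 𝓕 = {log f_n} an almost additive sequence of continuous functions on X. Suppose that for every x ∈ X the limit f̂(x) := lim_{n→∞} log(f_n(x)/f_{n-1}(σ_X x)) exists in ℝ. Then f̂ is a bounded Borel measurable function on X, lim_{n→∞} (1/n) sup_{x∈X} |log f_n(x) − (S_n f̂)(x)| = 0, and for every m ∈ M(X, σ_X), lim_{n→∞} (1/n) ∫ log f_n dm = ∫ f̂ dm. -/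
open MeasureTheory Filter Topology

noncomputable section

/-- The sequence `{log f_n}` is almost additive on `X` with constant `C`. -/
def AAOn {A : Type*} (X : Set (ℕ → A)) (f : ℕ → (ℕ → A) → ℝ) (C : ℝ) : Prop :=
  ∀ x ∈ X, ∀ n m : ℕ, 1 ≤ n → 1 ≤ m →
    Real.exp (-C) * (f n x * f m (shift^[n] x)) ≤ f (n + m) x ∧
    f (n + m) x ≤ Real.exp C * (f n x * f m (shift^[n] x))

/-- The sequence `{log f_n}` is weakly almost additive on `X`. -/
def WeakAAOn {A : Type*} (X : Set (ℕ → A)) (f : ℕ → (ℕ → A) → ℝ) : Prop :=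
  ∃ C : ℕ → ℝ, (∀ n : ℕ, 1 ≤ n → 0 < C n) ∧
    Tendsto (fun n : ℕ => C n / n) atTop (𝓝 0) ∧
    ∀ x ∈ X, ∀ n m : ℕ, 1 ≤ n → 1 ≤ m →
      Real.exp (-(C n)) * (f n x * f m (shift^[n] x)) ≤ f (n + m) x ∧
      f (n + m) x ≤ Real.exp (C n) * (f n x * f m (shift^[n] x))

theorem shift_cont_aux {k : ℕ} : Continuous (shift : (ℕ → Fin k) → ℕ → Fin k) :=
  continuous_pi fun i => continuous_apply (i + 1)

theorem iter_mem_aux {k : ℕ} {X : Set (ℕ → Fin k)} (hX : IsSubshift X) (n : ℕ) :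
    ∀ x ∈ X, shift^[n] x ∈ X := by
  induction n with
  | zero => intro x hx; simpa using hx
  | succ n ih =>
    intro x hx
    rw [Function.iterate_succ_apply']
    exact hX.2 ⟨_, ih x hx, rfl⟩

theorem birk_tendsto_aux {k : ℕ} {X : Set (ℕ → Fin k)} (hX : IsSubshift X)
    {f : ℕ → (ℕ → Fin k) → ℝ}
    (hfpos : ∀ n : ℕ, 1 ≤ n → ∀ x ∈ X, 0 < f n x)
    {fhat : (ℕ → Fin k) → ℝ}
    (hlim : ∀ x ∈ X, Tendsto
      (fun n : ℕ => Real.log (f (n + 2) x / f (n + 1) (shift x))) atTop (𝓝 (fhat x)))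
    (n : ℕ) (x : ℕ → Fin k) (hx : x ∈ X) :
    Tendsto (fun N : ℕ => Real.log (f (n + (N + 1)) x) - Real.log (f (N + 1) (shift^[n] x)))
      atTop (𝓝 (birk fhat n x)) := by
  induction n with
  | zero => simp [birk]
  | succ n ih =>
    have h1 := ih.comp (tendsto_add_atTop_nat 1)
    have hy := iter_mem_aux hX n x hx
    have h2 := h1.add (hlim _ hy)
    have e : birk fhat (n + 1) x = birk fhat n x + fhat (shift^[n] x) := by
      simp [birk, Finset.sum_range_succ]
    rw [e]
    refine h2.congr fun N => ?_
    have hz : shift (shift^[n] x) ∈ X := hX.2 ⟨_, hy, rfl⟩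
    rw [Real.log_div (hfpos _ (by omega) _ hy).ne' (hfpos _ (by omega) _ hz).ne']
    rw [Function.iterate_succ_apply']
    simp only [Function.comp]
    rw [show n + 1 + (N + 1) = n + (N + 1 + 1) by ring]
    ring

theorem birk_close_aux {k : ℕ} {X : Set (ℕ → Fin k)} (hX : IsSubshift X)
    {f : ℕ → (ℕ → Fin k) → ℝ}
    (hfpos : ∀ n : ℕ, 1 ≤ n → ∀ x ∈ X, 0 < f n x)
    {C : ℝ} (hAA : AAOn X f C)
    {fhat : (ℕ → Fin k) → ℝ}
    (hlim : ∀ x ∈ X, Tendsto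
      (fun n : ℕ => Real.log (f (n + 2) x / f (n + 1) (shift x))) atTop (𝓝 (fhat x)))
    (n : ℕ) (hn : 1 ≤ n) (x : ℕ → Fin k) (hx : x ∈ X) :
    |Real.log (f n x) - birk fhat n x| ≤ C := by
  have h := ((birk_tendsto_aux hX hfpos hlim n x hx).const_sub (Real.log (f n x))).abs
  refine le_of_tendsto' h fun N => ?_
  obtain ⟨h1, h2⟩ := hAA x hx n (N + 1) hn (by omega)
  have p1 := hfpos n hn x hx
  have p2 := hfpos (N + 1) (by omega) _ (iter_mem_aux hX n x hx)
  have p3 := hfpos (n + (N + 1)) (by omega) x hx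
  have l1 := Real.log_le_log (by positivity) h1
  have l2 := Real.log_le_log p3 h2
  rw [Real.log_mul (Real.exp_pos _).ne' (mul_pos p1 p2).ne', Real.log_mul p1.ne' p2.ne',
    Real.log_exp] at l1 l2
  rw [abs_le]
  constructor <;> linarith

/-- Theorem `go1` (i), first part: if `𝓕` is almost additive and
`f̂(x) = lim log (f_n(x)/f_{n-1}(σ x))` exists everywhere, then `f̂` is bounded and Borel
measurable, `(1/n)‖log f_n − S_n f̂‖_∞ → 0`, and `(1/n)∫ log f_n dm → ∫ f̂ dm` for every
invariant measure `m`. -/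
theorem stmt_4 {k : ℕ} (X : Set (ℕ → Fin k))
    (hX : IsSubshift X) (hspec : WeakSpec X)
    (f : ℕ → (ℕ → Fin k) → ℝ)
    (hfc : ∀ n : ℕ, 1 ≤ n → ContinuousOn (f n) X)
    (hfpos : ∀ n : ℕ, 1 ≤ n → ∀ x ∈ X, 0 < f n x)
    (hAA : ∃ C : ℝ, 0 < C ∧ AAOn X f C)
    (fhat : (ℕ → Fin k) → ℝ)
    (hlim : ∀ x ∈ X, Tendsto
      (fun n : ℕ => Real.log (f (n + 2) x / f (n + 1) (shift x))) atTop (𝓝 (fhat x))) :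
    Measurable (fun x : X => fhat ↑x) ∧
    (∃ B : ℝ, ∀ x ∈ X, |fhat x| ≤ B) ∧
    Tendsto (fun n : ℕ =>
      (1 / (n : ℝ)) * ⨆ x : X, |Real.log (f n ↑x) - birk fhat n ↑x|) atTop (𝓝 0) ∧
    ∀ m : Measure (ℕ → Fin k), IsInvariantOn m X →
      Tendsto (fun n : ℕ => (1 / (n : ℝ)) * ∫ x, Real.log (f n x) ∂m) atTop
        (𝓝 (∫ x, fhat x ∂m)) := by
  obtain ⟨C, hC, hAA⟩ := hAA
  have hclose := birk_close_aux hX hfpos hAA hlim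
  have hXc : IsCompact X := hX.1.isCompact
  have hXm : MeasurableSet X := hX.1.measurableSet
  have hlogc : ∀ n : ℕ, 1 ≤ n → ContinuousOn (fun x => Real.log (f n x)) X := fun n hn =>
    (hfc n hn).log fun x hx => (hfpos n hn x hx).ne'
  have hmaps : ∀ x ∈ X, shift x ∈ X := fun x hx => hX.2 ⟨x, hx, rfl⟩
  have hmeas : Measurable (fun x : X => fhat ↑x) := by
    refine measurable_of_tendsto_metrizable
      (f := fun (n : ℕ) (x : X) => Real.log (f (n + 2) x) - Real.log (f (n + 1) (shift x)))
      (fun n => ?_) ?_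
    · have h1 := (hlogc (n + 2) (by omega)).domRestrict
      have h2 := ((hlogc (n + 1) (by omega)).comp shift_cont_aux.continuousOn hmaps).domRestrict
      exact (h1.sub h2).measurable
    · rw [tendsto_pi_nhds]
      intro x
      refine (hlim x x.2).congr fun n => ?_
      rw [Real.log_div (hfpos _ (by omega) _ x.2).ne' (hfpos _ (by omega) _ (hmaps _ x.2)).ne']
  have hbdd : ∃ B : ℝ, ∀ x ∈ X, |fhat x| ≤ B := by
    obtain ⟨B, hB⟩ := hXc.exists_bound_of_continuousOn (hlogc 1 le_rfl)
    refine ⟨B + C, fun x hx => ?_⟩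
    have h1 := hB x hx
    have h2 := hclose 1 le_rfl x hx
    simp only [birk, Finset.range_one, Finset.sum_singleton, Function.iterate_zero, id] at h2
    rw [Real.norm_eq_abs, abs_le] at h1
    rw [abs_le] at h2 ⊢
    constructor <;> linarith [h1.1, h1.2, h2.1, h2.2]
  have hCn : Tendsto (fun n : ℕ => C / (n : ℝ)) atTop (𝓝 0) :=
    tendsto_const_div_atTop_nhds_zero_nat C
  refine ⟨hmeas, hbdd, ?_, ?_⟩
  · refine squeeze_zero' (Eventually.of_forall fun n => ?_) ?_ hCn
    · exact mul_nonneg (by positivity) (Real.iSup_nonneg fun x => abs_nonneg _)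
    · filter_upwards [eventually_ge_atTop 1] with n hn
      rw [one_div, div_eq_inv_mul]
      exact mul_le_mul_of_nonneg_left
        (Real.iSup_le (fun x => hclose n hn x x.2) hC.le) (by positivity)
  · intro m hm
    obtain ⟨hp, hmX, hinv⟩ := hm
    obtain ⟨B, hB⟩ := hbdd
    have hae : ∀ᵐ x ∂m, x ∈ X := (prob_compl_eq_zero_iff hXm).2 hmX
    have hrest : m.restrict X = m := Measure.restrict_eq_self_of_ae_mem hae
    have hmp : MeasurePreserving (shift : (ℕ → Fin k) → ℕ → Fin k) m m := by
      refine ⟨shift_cont_aux.measurable, ?_⟩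
      ext s hs
      rw [Measure.map_apply shift_cont_aux.measurable hs, hinv s hs]
    have hfm : AEStronglyMeasurable fhat m := by
      have := (aemeasurable_restrict_of_measurable_subtype (μ := m) hXm hmeas)
      rw [hrest] at this
      exact this.aestronglyMeasurable
    have hfi : Integrable fhat m :=
      Integrable.of_bound hfm B (hae.mono fun x hx => hB x hx)
    have hii : ∀ i : ℕ, Integrable (fun x => fhat (shift^[i] x)) m := fun i =>
      (hmp.iterate i).integrable_comp_of_integrable hfi
    have hie : ∀ i : ℕ, ∫ x, fhat (shift^[i] x) ∂m = ∫ x, fhat x ∂m := fun i => by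
      have h := hmp.iterate i
      have h2 := integral_map (μ := m) (f := fhat) h.measurable.aemeasurable
        (by rw [h.map_eq]; exact hfm)
      rw [h.map_eq] at h2
      exact h2.symm
    have hbi : ∀ n, Integrable (birk fhat n) m := fun n =>
      integrable_finsetSum _ fun i _ => hii i
    have hbe : ∀ n : ℕ, ∫ x, birk fhat n x ∂m = n * ∫ x, fhat x ∂m := fun n => by
      simp only [birk]
      rw [integral_finsetSum _ fun i _ => hii i]
      simp [hie]
    rw [tendsto_iff_dist_tendsto_zero]
    refine squeeze_zero' (Eventually.of_forall fun n => dist_nonneg) ?_ hCn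
    filter_upwards [eventually_ge_atTop 1] with n hn
    have hn0 : (0 : ℝ) < n := by exact_mod_cast hn
    have hLi : Integrable (fun x => Real.log (f n x)) m := by
      obtain ⟨B', hB'⟩ := hXc.exists_bound_of_continuousOn (hlogc n hn)
      refine Integrable.of_bound ?_ B' (hae.mono fun x hx => hB' x hx)
      rw [← hrest]
      exact (hlogc n hn).aestronglyMeasurable hXm
    have key : ‖∫ x, (Real.log (f n x) - birk fhat n x) ∂m‖ ≤ C := by
      have := norm_integral_le_of_norm_le_const (μ := m)
        (f := fun x => Real.log (f n x) - birk fhat n x) (C := C)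
        (hae.mono fun x hx => hclose n hn x hx)
      simpa using this
    rw [integral_sub hLi (hbi n), hbe] at key
    rw [Real.dist_eq, show 1 / (n : ℝ) * ∫ x, Real.log (f n x) ∂m - ∫ x, fhat x ∂m
      = (∫ x, Real.log (f n x) ∂m - n * ∫ x, fhat x ∂m) / n by field_simp, abs_div,
      abs_of_pos hn0]
    exact div_le_div_of_nonneg_right key hn0.le
end
end

section
/- Let (X, σ_X) be a one-sided subshift with the weak specification property and 𝓕 = {log f_n} an almost additive sequence of continuous functions on X. Suppose that for every x ∈ X the limit f̂(x) := lim_{n→∞} log(f_n(x)/f_{n-1}(σ_X x)) exists in ℝ. Then a measure μ ∈ M(X, σ_X) is a Gibbs measure for 𝓕 if and only if μ is a Gibbs measure for f̂. Consequently, if 𝓕 has a unique invariant Gibbs measure μ, then μ is the unique invariant Gibbs measure for f̂. -/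
open MeasureTheory Filter Topology

noncomputable section

theorem my_iter_mem {k : ℕ} (X : Set (ℕ → Fin k)) (hX : IsSubshift X) (x : ℕ → Fin k)
    (hx : x ∈ X) (n : ℕ) : shift^[n] x ∈ X := by
  induction n with
  | zero => exact hx
  | succ n ih =>
    rw [Function.iterate_succ_apply']
    exact hX.2 ⟨_, ih, rfl⟩

theorem my_tele {k : ℕ} (X : Set (ℕ → Fin k)) (hX : IsSubshift X)
    (f : ℕ → (ℕ → Fin k) → ℝ)
    (hfpos : ∀ n : ℕ, 1 ≤ n → ∀ x ∈ X, 0 < f n x)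
    (fhat : (ℕ → Fin k) → ℝ)
    (hlim : ∀ x ∈ X, Tendsto
      (fun n : ℕ => Real.log (f (n + 2) x / f (n + 1) (shift x))) atTop (𝓝 (fhat x)))
    (x : ℕ → Fin k) (hx : x ∈ X) (n : ℕ) :
    Tendsto (fun m : ℕ => Real.log (f (n + (m + 1)) x / f (m + 1) (shift^[n] x))) atTop
      (𝓝 (birk fhat n x)) := by
  induction n with
  | zero =>
    have h : (fun m : ℕ => Real.log (f (0 + (m + 1)) x / f (m + 1) (shift^[0] x)))
        = fun _ => 0 := by
      funext m
      have := hfpos (m + 1) (by omega) x hx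
      simp [this.ne']
    rw [h]
    simp [birk]
  | succ n ih =>
    have h1 := (ih.comp (tendsto_add_atTop_nat 1)).add
      (hlim _ (my_iter_mem X hX x hx n))
    have h2 : birk fhat (n + 1) x = birk fhat n x + fhat (shift^[n] x) := by
      simp [birk, Finset.sum_range_succ]
    rw [h2]
    refine h1.congr fun m => ?_
    have p1 := hfpos (n + (m + 1 + 1)) (by omega) x hx
    have p2 := hfpos (m + 1 + 1) (by omega) _ (my_iter_mem X hX x hx n)
    have p3 := hfpos (m + 1) (by omega) _ (my_iter_mem X hX x hx (n + 1))
    have e : n + 1 + (m + 1) = n + (m + 1 + 1) := by omega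
    rw [e]
    rw [Function.iterate_succ_apply'] at p3 ⊢
    simp only [Function.comp]
    rw [Real.log_div p1.ne' p2.ne', Real.log_div p2.ne' p3.ne', Real.log_div p1.ne' p3.ne']
    ring

theorem my_gibbs {k : ℕ} (X : Set (ℕ → Fin k)) (f g : ℕ → (ℕ → Fin k) → ℝ) (D : ℝ)
    (hD : 0 < D)
    (hf : ∀ n : ℕ, 1 ≤ n → ∀ x ∈ X, 0 < f n x)
    (hg : ∀ n : ℕ, 1 ≤ n → ∀ x ∈ X, 0 < g n x)
    (h1 : ∀ n : ℕ, 1 ≤ n → ∀ x ∈ X, f n x ≤ D * g n x)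
    (h2 : ∀ n : ℕ, 1 ≤ n → ∀ x ∈ X, g n x ≤ D * f n x)
    (μ : Measure (ℕ → Fin k)) (h : GibbsSeq X f μ) : GibbsSeq X g μ := by
  obtain ⟨P, C, hC, h⟩ := h
  refine ⟨P, C * D, by positivity, fun x hx n hn => ?_⟩
  obtain ⟨ha, hb⟩ := h x hx n hn
  have pf := hf n hn x hx
  have pg := hg n hn x hx
  have q1 := h1 n hn x hx
  have q2 := h2 n hn x hx
  have pe := Real.exp_pos (-(n : ℝ) * P)
  generalize Real.exp (-(n : ℝ) * P) = E at *
  have hm : 0 ≤ (μ (cyl X x n)).toReal := ENNReal.toReal_nonneg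
  generalize (μ (cyl X x n)).toReal = M at *
  rw [le_div_iff₀ (by positivity), inv_mul_le_iff₀ (by positivity)] at ha ⊢
  rw [div_le_iff₀ (by positivity)] at hb ⊢
  constructor
  · calc E * g n x ≤ E * (D * f n x) := by gcongr
      _ = D * (E * f n x) := by ring
      _ ≤ D * (C * M) := by gcongr
      _ = C * D * M := by ring
  · calc M ≤ C * (E * f n x) := hb
      _ ≤ C * (E * (D * g n x)) := by gcongr
      _ = C * D * (E * g n x) := by ring

/-- Theorem `go1` (i), second part: if `𝓕` is almost additive and
`f̂(x) = lim log (f_n(x)/f_{n-1}(σ x))` exists everywhere, then an invariant measure is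
Gibbs for `𝓕` iff it is Gibbs for `f̂`; and if `𝓕` has a unique invariant Gibbs measure
`μ`, then `μ` is the unique invariant Gibbs measure for `f̂`. -/
theorem stmt_5 {k : ℕ} (X : Set (ℕ → Fin k))
    (hX : IsSubshift X) (hspec : WeakSpec X)
    (f : ℕ → (ℕ → Fin k) → ℝ)
    (hfc : ∀ n : ℕ, 1 ≤ n → ContinuousOn (f n) X)
    (hfpos : ∀ n : ℕ, 1 ≤ n → ∀ x ∈ X, 0 < f n x)
    (hAA : ∃ C : ℝ, 0 < C ∧ AAOn X f C)
    (fhat : (ℕ → Fin k) → ℝ)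
    (hlim : ∀ x ∈ X, Tendsto
      (fun n : ℕ => Real.log (f (n + 2) x / f (n + 1) (shift x))) atTop (𝓝 (fhat x))) :
    (∀ μ : Measure (ℕ → Fin k), IsInvariantOn μ X →
      (GibbsSeq X f μ ↔ GibbsFun X fhat μ)) ∧
    (∀ μ : Measure (ℕ → Fin k), IsInvariantOn μ X → GibbsSeq X f μ →
      (∀ ν : Measure (ℕ → Fin k), IsInvariantOn ν X → GibbsSeq X f ν → ν = μ) →
      (GibbsFun X fhat μ ∧
        ∀ ν : Measure (ℕ → Fin k), IsInvariantOn ν X → GibbsFun X fhat ν → ν = μ)) := by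
  obtain ⟨C, hC, hAA⟩ := hAA
  have key : ∀ n : ℕ, 1 ≤ n → ∀ x ∈ X,
      Real.log (f n x) - C ≤ birk fhat n x ∧ birk fhat n x ≤ Real.log (f n x) + C := by
    intro n hn x hx
    have ht := my_tele X hX f hfpos fhat hlim x hx n
    have hb : ∀ m : ℕ, Real.log (f n x) - C ≤
        Real.log (f (n + (m + 1)) x / f (m + 1) (shift^[n] x)) ∧
        Real.log (f (n + (m + 1)) x / f (m + 1) (shift^[n] x)) ≤ Real.log (f n x) + C := by
      intro m
      obtain ⟨a, b⟩ := hAA x hx n (m + 1) hn (by omega)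
      have p1 := hfpos n hn x hx
      have p2 := hfpos (n + (m + 1)) (by omega) x hx
      have p3 := hfpos (m + 1) (by omega) _ (my_iter_mem X hX x hx n)
      have a' := Real.log_le_log (by positivity) a
      have b' := Real.log_le_log p2 b
      rw [Real.log_mul (Real.exp_pos _).ne' (by positivity), Real.log_mul p1.ne' p3.ne',
        Real.log_exp] at a' b'
      rw [Real.log_div p2.ne' p3.ne']
      constructor <;> linarith
    exact ⟨ge_of_tendsto' ht fun m => (hb m).1, le_of_tendsto' ht fun m => (hb m).2⟩
  have k1 : ∀ n : ℕ, 1 ≤ n → ∀ x ∈ X, f n x ≤ Real.exp C * Real.exp (birk fhat n x) := by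
    intro n hn x hx
    rw [← Real.exp_add, ← Real.log_le_iff_le_exp (hfpos n hn x hx)]
    linarith [(key n hn x hx).1]
  have k2 : ∀ n : ℕ, 1 ≤ n → ∀ x ∈ X, Real.exp (birk fhat n x) ≤ Real.exp C * f n x := by
    intro n hn x hx
    have p := hfpos n hn x hx
    rw [← Real.le_log_iff_exp_le (by positivity), Real.log_mul (Real.exp_pos _).ne' p.ne',
      Real.log_exp]
    linarith [(key n hn x hx).2]
  have main : ∀ μ : Measure (ℕ → Fin k), GibbsSeq X f μ ↔ GibbsFun X fhat μ := fun μ =>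
    ⟨fun h => my_gibbs X f (fun n x => Real.exp (birk fhat n x)) (Real.exp C) (Real.exp_pos _)
      hfpos (fun _ _ _ _ => Real.exp_pos _) k1 k2 μ h,
     fun h => my_gibbs X (fun n x => Real.exp (birk fhat n x)) f (Real.exp C) (Real.exp_pos _)
      (fun _ _ _ _ => Real.exp_pos _) hfpos k2 k1 μ h⟩
  exact ⟨fun μ _ => main μ, fun μ _ hG hu =>
    ⟨(main μ).1 hG, fun ν hν hGν => hu ν hν ((main ν).2 hGν)⟩⟩
end
end

section
/- Let (X, σ_X) be a one-sided subshift with the weak specification property and 𝓕 = {log f_n} a weakly almost additive sequence of continuous functions on X. Suppose that for every x ∈ X the limit f̂(x) := lim_{n→∞} log(f_n(x)/f_{n-1}(σ_X x)) exists in ℝ. Then f̂ is a bounded Borel measurable function on X, lim_{n→∞} (1/n) sup_{x∈X} |log f_n(x) − (S_n f̂)(x)| = 0, lim_{n→∞} (1/n) ∫ log f_n dm = ∫ f̂ dm for every m ∈ M(X, σ_X), and every invariant Gibbs measure for 𝓕 is an invariant weak Gibbs measure for f̂. -/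
open MeasureTheory Filter Topology

noncomputable section

theorem iter_mem {A : Type*} [TopologicalSpace A] {X : Set (ℕ → A)} (hX : IsSubshift X) (n : ℕ) :
    ∀ x ∈ X, shift^[n] x ∈ X := by
  induction n with
  | zero => intro x hx; exact hx
  | succ n ih =>
    intro x hx
    rw [Function.iterate_succ_apply']
    exact hX.2 ⟨_, ih x hx, rfl⟩

theorem tele {A : Type*} [TopologicalSpace A] {X : Set (ℕ → A)} (hX : IsSubshift X)
    (f : ℕ → (ℕ → A) → ℝ)
    (hfpos : ∀ n : ℕ, 1 ≤ n → ∀ x ∈ X, 0 < f n x)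
    (fhat : (ℕ → A) → ℝ)
    (hlim : ∀ x ∈ X, Tendsto
      (fun n : ℕ => Real.log (f (n + 2) x / f (n + 1) (shift x))) atTop (𝓝 (fhat x)))
    (x : ℕ → A) (hx : x ∈ X) (n : ℕ) :
    Tendsto (fun m : ℕ => Real.log (f (n + (m + 1)) x) - Real.log (f (m + 1) (shift^[n] x)))
      atTop (𝓝 (birk fhat n x)) := by
  induction n with
  | zero => simp [birk]
  | succ n ih =>
    have h1 := hlim _ (iter_mem hX n x hx)
    have h2 := (ih.comp (tendsto_add_atTop_nat 1)).add h1
    have : birk fhat (n + 1) x = birk fhat n x + fhat (shift^[n] x) := by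
      simp [birk, Finset.sum_range_succ]
    rw [this]
    refine h2.congr fun m => ?_
    have hs := iter_mem hX (n + 1) x hx
    rw [Function.iterate_succ_apply'] at hs ⊢
    rw [Real.log_div (hfpos _ (by omega) _ (iter_mem hX n x hx)).ne' (hfpos _ (by omega) _ hs).ne']
    simp only [Function.comp]
    rw [show n + (m + 1 + 1) = n + 1 + (m + 1) by ring]
    ring

theorem key {A : Type*} [TopologicalSpace A] {X : Set (ℕ → A)} (hX : IsSubshift X)
    (f : ℕ → (ℕ → A) → ℝ)
    (hfpos : ∀ n : ℕ, 1 ≤ n → ∀ x ∈ X, 0 < f n x)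
    (fhat : (ℕ → A) → ℝ)
    (hlim : ∀ x ∈ X, Tendsto
      (fun n : ℕ => Real.log (f (n + 2) x / f (n + 1) (shift x))) atTop (𝓝 (fhat x)))
    (C : ℕ → ℝ)
    (hC : ∀ x ∈ X, ∀ n m : ℕ, 1 ≤ n → 1 ≤ m →
      Real.exp (-(C n)) * (f n x * f m (shift^[n] x)) ≤ f (n + m) x ∧
      f (n + m) x ≤ Real.exp (C n) * (f n x * f m (shift^[n] x)))
    (x : ℕ → A) (hx : x ∈ X) (n : ℕ) (hn : 1 ≤ n) :
    |Real.log (f n x) - birk fhat n x| ≤ C n := by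
  have ht := tele hX f hfpos fhat hlim x hx n
  have hb : ∀ m : ℕ, Real.log (f n x) - C n ≤
        Real.log (f (n + (m + 1)) x) - Real.log (f (m + 1) (shift^[n] x)) ∧
      Real.log (f (n + (m + 1)) x) - Real.log (f (m + 1) (shift^[n] x))
        ≤ Real.log (f n x) + C n := by
    intro m
    obtain ⟨h1, h2⟩ := hC x hx n (m + 1) hn (by omega)
    have p1 := hfpos n hn x hx
    have p2 := hfpos (m + 1) (by omega) _ (iter_mem hX n x hx)
    have p3 := hfpos (n + (m + 1)) (by omega) x hx
    have l1 := Real.log_le_log (by positivity) h1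
    have l2 := Real.log_le_log p3 h2
    rw [Real.log_mul (Real.exp_pos _).ne' (by positivity), Real.log_mul p1.ne' p2.ne',
      Real.log_exp] at l1 l2
    constructor <;> linarith
  have a := ge_of_tendsto' ht fun m => (hb m).1
  have b := le_of_tendsto' ht fun m => (hb m).2
  rw [abs_le]; constructor <;> linarith

/-- Theorem `go1` (ii): if `𝓕` is weakly almost additive and
`f̂(x) = lim log (f_n(x)/f_{n-1}(σ x))` exists everywhere, then `f̂` is bounded Borel
measurable, `(1/n)‖log f_n − S_n f̂‖_∞ → 0`, `(1/n)∫ log f_n dm → ∫ f̂ dm` for every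
invariant `m`, and every invariant Gibbs measure for `𝓕` is an invariant weak Gibbs
measure for `f̂`. -/
theorem stmt_6 {k : ℕ} (X : Set (ℕ → Fin k))
    (hX : IsSubshift X) (hspec : WeakSpec X)
    (f : ℕ → (ℕ → Fin k) → ℝ)
    (hfc : ∀ n : ℕ, 1 ≤ n → ContinuousOn (f n) X)
    (hfpos : ∀ n : ℕ, 1 ≤ n → ∀ x ∈ X, 0 < f n x)
    (hWAA : WeakAAOn X f)
    (fhat : (ℕ → Fin k) → ℝ)
    (hlim : ∀ x ∈ X, Tendsto
      (fun n : ℕ => Real.log (f (n + 2) x / f (n + 1) (shift x))) atTop (𝓝 (fhat x))) :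
    Measurable (fun x : X => fhat ↑x) ∧
    (∃ B : ℝ, ∀ x ∈ X, |fhat x| ≤ B) ∧
    Tendsto (fun n : ℕ =>
      (1 / (n : ℝ)) * ⨆ x : X, |Real.log (f n ↑x) - birk fhat n ↑x|) atTop (𝓝 0) ∧
    (∀ m : Measure (ℕ → Fin k), IsInvariantOn m X →
      Tendsto (fun n : ℕ => (1 / (n : ℝ)) * ∫ x, Real.log (f n x) ∂m) atTop
        (𝓝 (∫ x, fhat x ∂m))) ∧
    (∀ μ : Measure (ℕ → Fin k), IsInvariantOn μ X → GibbsSeq X f μ →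
      WeakGibbsFun X fhat μ) := by
  obtain ⟨C, hCpos, hClim, hC⟩ := hWAA
  have hkey := key hX f hfpos fhat hlim C hC
  have hXc : IsCompact X := hX.1.isCompact
  have hXm : MeasurableSet X := hX.1.measurableSet
  have hlogc : ∀ n : ℕ, 1 ≤ n → ContinuousOn (fun x => Real.log (f n x)) X := fun n hn =>
    (hfc n hn).log fun x hx => (hfpos n hn x hx).ne'
  have hsc : Continuous (shift : (ℕ → Fin k) → ℕ → Fin k) :=
    continuous_pi fun i => continuous_apply (i + 1)
  have hmeas : Measurable (fun x : X => fhat ↑x) := by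
    refine measurable_of_tendsto_metrizable
      (f := fun (n : ℕ) (x : X) => Real.log (f (n + 2) x / f (n + 1) (shift x))) ?_ ?_
    · intro n
      have h1 : Continuous fun x : X => f (n + 2) x :=
        continuousOn_iff_continuous_domRestrict.1 (hfc (n + 2) (by omega))
      have h2 : Continuous fun x : X => f (n + 1) (shift x) := by
        refine continuousOn_iff_continuous_domRestrict.1
          ((hfc (n + 1) (by omega)).comp hsc.continuousOn fun x hx => hX.2 ⟨x, hx, rfl⟩)
      exact Real.measurable_log.comp (h1.measurable.div h2.measurable)
    · rw [tendsto_pi_nhds]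
      exact fun x => hlim x x.2
  have hlogb : ∀ n : ℕ, 1 ≤ n → ∃ B : ℝ, ∀ x ∈ X, |Real.log (f n x)| ≤ B := fun n hn => by
    simpa using hXc.exists_bound_of_continuousOn (hlogc n hn)
  have hbdd : ∃ B : ℝ, ∀ x ∈ X, |fhat x| ≤ B := by
    obtain ⟨B, hB⟩ := hlogb 1 le_rfl
    refine ⟨B + C 1, fun x hx => ?_⟩
    have h1 := hkey x hx 1 le_rfl
    have h2 := hB x hx
    simp only [birk, Finset.sum_range_one, Function.iterate_zero, id] at h1
    rw [abs_le] at *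
    constructor <;> linarith
  refine ⟨hmeas, hbdd, ?_, ?_, ?_⟩
  · refine squeeze_zero' (g := fun n : ℕ => C n / n) ?_ ?_ hClim
    · exact Eventually.of_forall fun n =>
        mul_nonneg (by positivity) (Real.iSup_nonneg fun x => abs_nonneg _)
    · filter_upwards [eventually_ge_atTop 1] with n hn
      rw [one_div, div_eq_inv_mul]
      exact mul_le_mul_of_nonneg_left
        (Real.iSup_le (fun x => hkey x x.2 n hn) (hCpos n hn).le) (by positivity)
  · rintro m ⟨hp, hm1, hinv⟩
    have hae : ∀ᵐ x ∂m, x ∈ X := by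
      rw [← prob_compl_eq_zero_iff hXm] at hm1
      exact hm1
    have hres : m.restrict X = m := Measure.restrict_eq_self_of_ae_mem hae
    have hmp : MeasurePreserving (shift : (ℕ → Fin k) → ℕ → Fin k) m m :=
      ⟨hsc.measurable, Measure.ext fun B hB => by
        rw [Measure.map_apply hsc.measurable hB, hinv B hB]⟩
    have hfm : AEStronglyMeasurable fhat m := by
      rw [← hres]
      exact (aemeasurable_restrict_of_measurable_subtype hXm hmeas).aestronglyMeasurable
    have hfi : Integrable fhat m := by
      obtain ⟨B, hB⟩ := hbdd
      exact Integrable.of_bound hfm B (hae.mono fun x hx => hB x hx)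
    have hli : ∀ n : ℕ, 1 ≤ n → Integrable (fun x => Real.log (f n x)) m := by
      intro n hn
      obtain ⟨B, hB⟩ := hlogb n hn
      refine Integrable.of_bound ?_ B (hae.mono fun x hx => hB x hx)
      rw [← hres]
      exact (hlogc n hn).aestronglyMeasurable hXm
    have hci : ∀ i : ℕ, Integrable (fun x => fhat (shift^[i] x)) m := fun i =>
      (hmp.iterate i).integrable_comp_of_integrable hfi
    have hce : ∀ i : ℕ, ∫ x, fhat (shift^[i] x) ∂m = ∫ x, fhat x ∂m := by
      intro i
      have h := (hmp.iterate i)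
      have h2 := integral_map h.measurable.aemeasurable (f := fhat) (by rw [h.map_eq]; exact hfm)
      rw [h.map_eq] at h2
      exact h2.symm
    have hbi : ∀ n, Integrable (birk fhat n) m := fun n =>
      integrable_finsetSum _ fun i _ => hci i
    have hbe : ∀ n : ℕ, ∫ x, birk fhat n x ∂m = n * ∫ x, fhat x ∂m := by
      intro n
      simp only [birk]
      rw [integral_finsetSum _ fun i _ => hci i]
      simp [hce]
    rw [tendsto_iff_dist_tendsto_zero]
    refine squeeze_zero' (g := fun n : ℕ => C n / n) (Eventually.of_forall fun n => dist_nonneg)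
      ?_ hClim
    filter_upwards [eventually_ge_atTop 1] with n hn
    have hn0 : (0 : ℝ) < n := by exact_mod_cast hn
    have e : 1 / (n : ℝ) * ∫ x, Real.log (f n x) ∂m - ∫ x, fhat x ∂m
        = (∫ x, (Real.log (f n x) - birk fhat n x) ∂m) / n := by
      rw [integral_sub (hli n hn) (hbi n), hbe]
      field_simp
    rw [Real.dist_eq, e, abs_div, abs_of_pos hn0]
    gcongr
    have hb : ∀ᵐ x ∂m, ‖Real.log (f n x) - birk fhat n x‖ ≤ C n :=
      hae.mono fun x hx => hkey x hx n hn
    have := norm_integral_le_of_norm_le_const hb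
    simpa using this
  · rintro μ hμ ⟨P, D, hD, hG⟩
    refine ⟨P, fun n => D * Real.exp (C n), fun n _ => by positivity, ?_, ?_⟩
    · have : ∀ n : ℕ, Real.log (D * Real.exp (C n)) / n = Real.log D / n + C n / n := by
        intro n
        rw [Real.log_mul hD.ne' (Real.exp_pos _).ne', Real.log_exp, add_div]
      simp only [this]
      simpa using (tendsto_const_div_atTop_nhds_zero_nat (Real.log D)).add hClim
    · intro x hx n hn
      obtain ⟨g1, g2⟩ := hG x hx n hn
      have p1 := hfpos n hn x hx
      obtain ⟨k1, k2⟩ := abs_le.1 (hkey x hx n hn)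
      set r := Real.exp (Real.log (f n x) - birk fhat n x) with hr
      have r1 : Real.exp (-C n) ≤ r := Real.exp_le_exp.2 k1
      have r2 : r ≤ Real.exp (C n) := Real.exp_le_exp.2 k2
      have hfr : f n x = r * Real.exp (birk fhat n x) := by
        rw [hr, ← Real.exp_add, sub_add_cancel, Real.exp_log p1]
      have r0 : 0 < r := Real.exp_pos _
      have e : (μ (cyl X x n)).toReal / (Real.exp (-(n : ℝ) * P) * Real.exp (birk fhat n x))
          = (μ (cyl X x n)).toReal / (Real.exp (-(n : ℝ) * P) * f n x) * r := by
        rw [hfr]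
        field_simp
      show (D * Real.exp (C n))⁻¹ ≤ (μ (cyl X x n)).toReal /
          (Real.exp (-(n : ℝ) * P) * Real.exp (birk fhat n x)) ∧ (μ (cyl X x n)).toReal /
          (Real.exp (-(n : ℝ) * P) * Real.exp (birk fhat n x)) ≤ D * Real.exp (C n)
      rw [e]
      constructor
      · rw [mul_inv, ← Real.exp_neg]
        exact mul_le_mul g1 r1 (Real.exp_pos _).le (le_trans (by positivity) g1)
      · exact mul_le_mul g2 r2 r0.le hD.le
end
end

section
/- Let (X, σ_X) be a one-sided subshift with the weak specification property, 𝓕 = {log f_n} a weakly almost additive sequence of continuous functions on X, and ν ∈ M(X, σ_X) an invariant Gibbs measure for 𝓕 with constants P ∈ ℝ and C_0 > 0, i.e. C_0^{-1} ≤ ν[x_1…x_n]/(e^{-nP} f_n(x)) ≤ C_0 for all x ∈ X and n ∈ ℕ. Suppose that for every x ∈ X the limit r(x) := lim_{n→∞} log(ν[x_1…x_n]/ν[x_2…x_n]) + P exists in ℝ. Then r is a bounded Borel measurable function on X, lim_{n→∞} (1/n) ∫ log f_n dμ = ∫ r dμ for every μ ∈ M(X, σ_X), and ν is an invariant weak Gibbs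 measure for r. -/
open MeasureTheory Filter Topology

noncomputable section

lemma shift_mem {A : Type*} [TopologicalSpace A] {X : Set (ℕ → A)} (hX : IsSubshift X) {x : ℕ → A}
    (hx : x ∈ X) : shift x ∈ X := hX.2 ⟨x, hx, rfl⟩

lemma shift_iter_mem {A : Type*} [TopologicalSpace A] {X : Set (ℕ → A)} (hX : IsSubshift X)
    {x : ℕ → A} (hx : x ∈ X) (n : ℕ) : shift^[n] x ∈ X := by
  induction n with
  | zero => exact hx
  | succ n ih => rw [Function.iterate_succ_apply']; exact shift_mem hX ih

lemma meas_shift {k : ℕ} : Measurable (shift : (ℕ → Fin k) → ℕ → Fin k) :=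
  measurable_pi_lambda _ fun i => measurable_pi_apply (i + 1)

lemma meas_cyl {k : ℕ} (X : Set (ℕ → Fin k)) (ν : Measure (ℕ → Fin k)) (n : ℕ) :
    Measurable fun x : ℕ → Fin k => (ν (cyl X x n)).toReal := by
  have h1 : Measurable fun w : Fin n → Fin k =>
      (ν {z ∈ X | ∀ i : Fin n, z i = w i}).toReal := Measurable.of_discrete
  have h2 : Measurable fun (x : ℕ → Fin k) (i : Fin n) => x i :=
    measurable_pi_lambda _ fun i => measurable_pi_apply _
  convert h1.comp h2 using 1
  funext x
  have : cyl X x n = {z ∈ X | ∀ i : Fin n, z i = x i} := by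
    ext z
    simp only [cyl, Set.mem_setOf_eq, and_congr_right_iff]
    exact fun _ => ⟨fun h i => h i i.2, fun h i hi => h ⟨i, hi⟩⟩
  simp [this]

lemma key_tendsto {A : Type*} [TopologicalSpace A] {X : Set (ℕ → A)} (hX : IsSubshift X)
    (L : ℕ → (ℕ → A) → ℝ) (P : ℝ) (r : (ℕ → A) → ℝ)
    (h : ∀ x ∈ X, Tendsto (fun n : ℕ => L (n + 2) x - L (n + 1) (shift x) + P) atTop (𝓝 (r x)))
    (n : ℕ) : ∀ x ∈ X, Tendsto (fun m : ℕ => L (n + (m + 1)) x - L (m + 1) (shift^[n] x) + n * P)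
      atTop (𝓝 (birk r n x)) := by
  induction n with
  | zero => intro x hx; simp [birk]
  | succ n ih =>
    intro x hx
    have h1 := (ih x hx).comp (tendsto_add_atTop_nat 1)
    have h2 := h _ (shift_iter_mem hX hx n)
    have h3 := h1.add h2
    have e : birk r (n + 1) x = birk r n x + r (shift^[n] x) := by
      simp [birk, Finset.sum_range_succ]
    rw [e]
    refine h3.congr fun m => ?_
    simp only [Function.comp, ← Function.iterate_succ_apply']
    rw [show n + (m + 1 + 1) = n + 1 + (m + 1) by ring]
    push_cast
    ring

/-- Theorem `cando1` (ii): for a weakly almost additive `𝓕` with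
invariant Gibbs measure `ν`, if `r(x) = lim log(ν[x_1…x_n]/ν[x_2…x_n]) + P` exists
everywhere, then `r` is bounded Borel measurable, `(1/n)∫ log f_n dμ → ∫ r dμ` for every
invariant `μ`, and `ν` is an invariant weak Gibbs measure for `r`. -/
theorem stmt_9 {k : ℕ} (X : Set (ℕ → Fin k))
    (hX : IsSubshift X) (hspec : WeakSpec X)
    (f : ℕ → (ℕ → Fin k) → ℝ)
    (hfc : ∀ n : ℕ, 1 ≤ n → ContinuousOn (f n) X)
    (hfpos : ∀ n : ℕ, 1 ≤ n → ∀ x ∈ X, 0 < f n x)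
    (hWAA : WeakAAOn X f)
    (ν : Measure (ℕ → Fin k)) (hν : IsInvariantOn ν X)
    (P C₀ : ℝ) (hC₀ : 0 < C₀)
    (hGibbs : ∀ x ∈ X, ∀ n : ℕ, 1 ≤ n →
      C₀⁻¹ ≤ (ν (cyl X x n)).toReal / (Real.exp (-(n : ℝ) * P) * f n x) ∧
      (ν (cyl X x n)).toReal / (Real.exp (-(n : ℝ) * P) * f n x) ≤ C₀)
    (r : (ℕ → Fin k) → ℝ)
    (hr : ∀ x ∈ X, Tendsto (fun n : ℕ =>
      Real.log ((ν (cyl X x (n + 2))).toReal / (ν (cyl X (shift x) (n + 1))).toReal) + P)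
      atTop (𝓝 (r x))) :
    Measurable (fun x : X => r ↑x) ∧
    (∃ B : ℝ, ∀ x ∈ X, |r x| ≤ B) ∧
    (∀ μ : Measure (ℕ → Fin k), IsInvariantOn μ X →
      Tendsto (fun n : ℕ => (1 / (n : ℝ)) * ∫ x, Real.log (f n x) ∂μ) atTop
        (𝓝 (∫ x, r x ∂μ))) ∧
    WeakGibbsFun X r ν := by
  classical
  obtain ⟨C, hCpos, hClim, hC⟩ := hWAA
  set K := Real.log C₀ with hK
  set L : ℕ → (ℕ → Fin k) → ℝ := fun n x => Real.log (ν (cyl X x n)).toReal with hL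
  have hpos : ∀ x ∈ X, ∀ n, 1 ≤ n → 0 < (ν (cyl X x n)).toReal := by
    intro x hx n hn
    have h1 := (hGibbs x hx n hn).1
    have h2 : 0 < Real.exp (-(n : ℝ) * P) * f n x := mul_pos (Real.exp_pos _) (hfpos n hn x hx)
    have h3 := (inv_pos.2 hC₀).trans_le h1
    exact (div_pos_iff_of_pos_right h2).1 h3
  have hLf : ∀ x ∈ X, ∀ n : ℕ, 1 ≤ n → |L n x + n * P - Real.log (f n x)| ≤ K := by
    intro x hx n hn
    obtain ⟨h1, h2⟩ := hGibbs x hx n hn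
    have hf := hfpos n hn x hx
    have hp := hpos x hx n hn
    have e : Real.log ((ν (cyl X x n)).toReal / (Real.exp (-(n : ℝ) * P) * f n x))
        = L n x + n * P - Real.log (f n x) := by
      rw [Real.log_div hp.ne' (by positivity), Real.log_mul (by positivity) hf.ne', Real.log_exp]
      simp only [hL]; ring
    rw [← e, abs_le]
    constructor
    · have := Real.log_le_log (inv_pos.2 hC₀) h1
      rwa [Real.log_inv] at this
    · exact Real.log_le_log (by positivity) h2
  have hr' : ∀ x ∈ X, Tendsto (fun n : ℕ => L (n + 2) x - L (n + 1) (shift x) + P) atTop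
      (𝓝 (r x)) := by
    intro x hx
    refine (hr x hx).congr fun n => ?_
    rw [Real.log_div (hpos x hx _ (by omega)).ne'
      (hpos _ (shift_mem hX hx) _ (by omega)).ne']
  have hadd : ∀ x ∈ X, ∀ n m : ℕ, 1 ≤ n → 1 ≤ m →
      |Real.log (f (n + m) x) - Real.log (f n x) - Real.log (f m (shift^[n] x))| ≤ C n := by
    intro x hx n m hn hm
    obtain ⟨h1, h2⟩ := hC x hx n m hn hm
    have a := hfpos n hn x hx
    have b := hfpos m hm _ (shift_iter_mem hX hx n)
    have c := hfpos (n + m) (by omega) x hx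
    have h1 := Real.log_le_log (by positivity) h1
    have h2 := Real.log_le_log c h2
    rw [Real.log_mul (by positivity) (by positivity), Real.log_mul a.ne' b.ne', Real.log_exp]
      at h1 h2
    rw [abs_le]
    constructor <;> linarith
  have key : ∀ x ∈ X, ∀ n : ℕ, 1 ≤ n → |birk r n x - Real.log (f n x)| ≤ 2 * K + C n := by
    intro x hx n hn
    have t := ((key_tendsto hX L P r hr' n x hx).sub_const (Real.log (f n x))).abs
    refine le_of_tendsto t (Eventually.of_forall fun m => ?_)
    have a := abs_le.1 (hLf x hx (n + (m + 1)) (by omega))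
    have b := abs_le.1 (hLf _ (shift_iter_mem hX hx n) (m + 1) (by omega))
    have c := abs_le.1 (hadd x hx n (m + 1) hn (by omega))
    push_cast at a b
    rw [abs_le]
    constructor <;> linarith
  have hcomp : IsCompact X := hX.1.isCompact
  have hXm : MeasurableSet X := hX.1.measurableSet
  have hlogc : ∀ n, 1 ≤ n → ContinuousOn (fun x => Real.log (f n x)) X := fun n hn =>
    (hfc n hn).log fun x hx => (hfpos n hn x hx).ne'
  have hbdd : ∃ B : ℝ, ∀ x ∈ X, |r x| ≤ B := by
    obtain ⟨B, hB⟩ := hcomp.exists_bound_of_continuousOn (hlogc 1 le_rfl)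
    refine ⟨B + (2 * K + C 1), fun x hx => ?_⟩
    have h1 := abs_le.1 (hB x hx)
    have h2 := abs_le.1 (key x hx 1 le_rfl)
    simp only [birk, Finset.sum_range_one, Function.iterate_zero, id] at h2
    rw [abs_le]
    constructor <;> linarith
  have hmeas : Measurable (fun x : X => r ↑x) := by
    refine measurable_of_tendsto_metrizable (f := fun n (x : X) =>
      Real.log ((ν (cyl X x (n + 2))).toReal / (ν (cyl X (shift x) (n + 1))).toReal) + P) ?_ ?_
    · intro n
      have h := (((meas_cyl X ν (n + 2)).div ((meas_cyl X ν (n + 1)).comp meas_shift)).log).add_const P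
      exact h.comp measurable_subtype_coe
    · exact tendsto_pi_nhds.2 fun x => hr x x.2
  refine ⟨hmeas, hbdd, ?_, ?_⟩
  · intro μ hμ
    obtain ⟨hμp, hμX, hinv⟩ := hμ
    have hae : ∀ᵐ x ∂μ, x ∈ X := by
      rw [← prob_compl_eq_zero_iff hXm] at hμX
      exact hμX
    have hres : μ.restrict X = μ := Measure.restrict_eq_self_of_ae_mem hae
    have hrm : AEStronglyMeasurable r μ := by
      have := aemeasurable_restrict_of_measurable_subtype (μ := μ) hXm hmeas
      rw [hres] at this
      exact this.aestronglyMeasurable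
    have hrint : Integrable r μ := by
      obtain ⟨B, hB⟩ := hbdd
      exact Integrable.of_bound hrm B (hae.mono hB)
    have hmp : MeasurePreserving shift μ μ := ⟨meas_shift, by
      ext B hB
      rw [Measure.map_apply meas_shift hB, hinv B hB]⟩
    have hfi : ∀ n, 1 ≤ n → Integrable (fun x => Real.log (f n x)) μ := by
      intro n hn
      have := (hlogc n hn).integrableOn_compact (μ := μ) hcomp
      rwa [IntegrableOn, hres] at this
    have hri : ∀ i : ℕ, Integrable (fun x => r (shift^[i] x)) μ := fun i =>
      (hmp.iterate i).integrable_comp_of_integrable hrint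
    have hrI : ∀ i : ℕ, ∫ x, r (shift^[i] x) ∂μ = ∫ x, r x ∂μ := by
      intro i
      have h := hmp.iterate i
      have := integral_map (μ := μ) h.measurable.aemeasurable (f := r) (by rw [h.map_eq]; exact hrm)
      rw [← this, h.map_eq]
    have hbi : ∀ n, Integrable (birk r n) μ := fun n => integrable_finset_sum _ fun i _ => hri i
    have hbI : ∀ n : ℕ, ∫ x, birk r n x ∂μ = n * ∫ x, r x ∂μ := by
      intro n
      simp only [birk]
      rw [integral_finset_sum _ fun i _ => hri i]
      simp [hrI]
    rw [tendsto_iff_norm_sub_tendsto_zero]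
    have hlim : Tendsto (fun n : ℕ => 2 * K / (n : ℝ) + C n / n) atTop (𝓝 0) := by
      simpa using (tendsto_const_div_atTop_nhds_zero_nat (2 * K)).add hClim
    refine squeeze_zero' (Eventually.of_forall fun n => norm_nonneg _) ?_ hlim
    filter_upwards [eventually_ge_atTop 1] with n hn
    have hn0 : (0 : ℝ) < n := by exact_mod_cast hn
    have h1 : ‖∫ x, (birk r n x - Real.log (f n x)) ∂μ‖ ≤ 2 * K + C n := by
      have := norm_integral_le_of_norm_le_const (μ := μ) (C := 2 * K + C n)
        (f := fun x => birk r n x - Real.log (f n x)) (hae.mono fun x hx => key x hx n hn)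
      simpa using this
    rw [integral_sub (hbi n) (hfi n hn), hbI] at h1
    rw [← add_div, le_div_iff₀ hn0]
    refine le_trans (le_of_eq ?_) h1
    rw [← abs_of_pos hn0, ← Real.norm_eq_abs, ← norm_mul, ← norm_neg, Real.norm_of_nonneg hn0.le]
    congr 1
    field_simp
    ring
  · refine ⟨P, fun n => Real.exp (3 * K + C n), fun n _ => Real.exp_pos _, ?_, ?_⟩
    · simp only [Real.log_exp, add_div]
      simpa using (tendsto_const_div_atTop_nhds_zero_nat (3 * K)).add hClim
    · intro x hx n hn
      have a := abs_le.1 (hLf x hx n hn)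
      have b := abs_le.1 (key x hx n hn)
      have e : (ν (cyl X x n)).toReal = Real.exp (L n x) := (Real.exp_log (hpos x hx n hn)).symm
      rw [e, ← Real.exp_add, ← Real.exp_sub, ← Real.exp_neg, Real.exp_le_exp, Real.exp_le_exp]
      constructor <;> linarith
end
end

section
/- Assume Setting (C). Suppose M_{22}|_{π^{-1}(22)} = [[0, a₁],[a₁, 0]] for some a₁ > 0, and suppose that M(2,1) = M(3,1) or M(1,2) = M(1,3). Then for every y ∈ Y the limit ĥ(y) := lim_{n→∞} log(h_n(y)/h_{n-1}(σ_Y y)) exists in ℝ, and the function ĥ is continuous on Y. In particular, if f = 0 then ĥ is continuous on Y. -/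
open MeasureTheory Filter Topology

noncomputable section

open scoped Classical

/-- `g_n(y) = sup_{E_n(y)} Σ_{x ∈ E_n(y)} e^{(S_n f)(x)}`: the sum, over all `n`-blocks
of `X` projecting to `y_1…y_n`, of the sup of `e^{S_n f}` over the corresponding
cylinder. -/
noncomputable def gseq {kX kY : ℕ} (X : Set (ℕ → Fin kX)) (πs : Fin kX → Fin kY)
    (f : (ℕ → Fin kX) → ℝ) (n : ℕ) (y : ℕ → Fin kY) : ℝ :=
  ∑ u : Fin n → Fin kX,
    if ((∃ x ∈ X, ∀ i : Fin n, x ↑i = u i) ∧ ∀ i : Fin n, πs (u i) = y ↑i) then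
      ⨆ x : ↥{z ∈ X | ∀ i : Fin n, z ↑i = u i}, Real.exp (birk f n ↑x)
    else 0

/-- `h_n(y) = sup_{E_n(y)} Σ_{x ∈ E_n(y)} e^{(S_{n-1} f)(x)}` for `n ≥ 2`, and
`h_1 = g_1`. -/
noncomputable def hseqS {kX kY : ℕ} (X : Set (ℕ → Fin kX)) (πs : Fin kX → Fin kY)
    (f : (ℕ → Fin kX) → ℝ) (n : ℕ) (y : ℕ → Fin kY) : ℝ :=
  if n ≤ 1 then gseq X πs f n y
  else
    ∑ u : Fin n → Fin kX,
      if ((∃ x ∈ X, ∀ i : Fin n, x ↑i = u i) ∧ ∀ i : Fin n, πs (u i) = y ↑i) then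
        ⨆ x : ↥{z ∈ X | ∀ i : Fin n, z ↑i = u i}, Real.exp (birk f (n - 1) ↑x)
      else 0

/-- Irreducibility of a subshift: any two words appearing in `X` can be connected. -/
def IrreducibleShift {A : Type*} (X : Set (ℕ → A)) : Prop :=
  ∀ u v : List A, AppearsIn X u → AppearsIn X v →
    ∃ w : List A, AppearsIn X (u ++ w ++ v)

/-- For a factor map collapsing all symbols except `0`, and a two-coordinate potential
given by `F`: `h_n(y)` is the sum over `n`-blocks `x_1…x_n` of `X` with
`π(x_1)…π(x_n) = y_1…y_n` of `e^{F(x_1,x_2)+⋯+F(x_{n-1},x_n)}` (for `n ≥ 2`), and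
`h_1(y) = Σ_{a : π(a) = y_1} sup_{x ∈ [a]} e^{f(x)}`. -/
noncomputable def hseqC {l : ℕ} (X : Set (ℕ → Fin l)) (πs : Fin l → Fin 2)
    (F : Fin l → Fin l → ℝ) (f : (ℕ → Fin l) → ℝ) (n : ℕ) (y : ℕ → Fin 2) : ℝ :=
  if n ≤ 1 then
    ∑ a : Fin l,
      if πs a = y 0 then (⨆ x : ↥{z ∈ X | z 0 = a}, Real.exp (f ↑x)) else 0
  else
    ∑ u : Fin n → Fin l,
      if ((∃ x ∈ X, ∀ i : Fin n, x ↑i = u i) ∧ ∀ i : Fin n, πs (u i) = y ↑i) then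
        Real.exp (∑ i : Fin n,
          if h : (↑i + 1 : ℕ) < n then F (u i) (u ⟨↑i + 1, h⟩) else 0)
      else 0

/-- The one-block map of Setting (C): symbol `1` (here `0`) goes to `1` (here `0`),
symbols `2, 3` (here `1, 2`) go to `2` (here `1`). -/
def projC {l : ℕ} : Fin l → Fin 2 := fun a => if (a : ℕ) = 0 then 0 else 1

/-- The matrix `M(i,j) = e^{f[ij]} a_{ij}` of Setting (C). -/
noncomputable def MC {l : ℕ} (A : Fin l → Fin l → ℕ) (F : Fin l → Fin l → ℝ) :
    Fin l → Fin l → ℝ := fun i j => Real.exp (F i j) * (A i j : ℝ)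

/-- Similarity of `2 × 2` real matrices. -/
def Similar2 (M N : Matrix (Fin 2) (Fin 2) ℝ) : Prop :=
  ∃ P : Matrix (Fin 2) (Fin 2) ℝ, IsUnit P.det ∧ N = P⁻¹ * M * P




/-- Backward vectors. -/
def Vv (M : Fin 3 → Fin 3 → ℝ) : ℕ → (ℕ → Fin 2) → Fin 3 → ℝ
  | 0, y, i => if projC i = y 0 then 1 else 0
  | n + 1, y, i => if projC i = y 0 then ∑ j, M i j * Vv M n (shift y) j else 0

/-- Weight of a block. -/
def Pw (M : Fin 3 → Fin 3 → ℝ) (n : ℕ) (y : ℕ → Fin 2) (u : Fin (n + 1) → Fin 3) : ℝ :=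
  (∏ i : Fin n, M (u i.castSucc) (u i.succ)) *
    ∏ i : Fin (n + 1), if projC (u i) = y i then 1 else 0

lemma Pw_cons (M : Fin 3 → Fin 3 → ℝ) (n : ℕ) (y : ℕ → Fin 2) (i j : Fin 3)
    (u : Fin n → Fin 3) :
    Pw M (n + 1) y (Fin.cons i (Fin.cons j u : Fin (n + 1) → Fin 3)) =
      (if projC i = y 0 then 1 else 0) * (M i j * Pw M n (shift y) (Fin.cons j u)) := by
  unfold Pw
  rw [Fin.prod_univ_succ, Fin.prod_univ_succ (n := n + 1)]
  simp only [Fin.cons_zero, Fin.cons_succ, Fin.castSucc_zero, Fin.val_zero, Fin.val_succ,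
    ← Fin.succ_castSucc, shift]
  ring

lemma Vv_eq (M : Fin 3 → Fin 3 → ℝ) (n : ℕ) (y : ℕ → Fin 2) (i : Fin 3) :
    Vv M n y i = ∑ u : Fin n → Fin 3, Pw M n y (Fin.cons i u) := by
  induction n generalizing y i with
  | zero => simp [Vv, Pw]
  | succ n ih =>
    rw [← (Fin.consEquiv (fun _ : Fin (n + 1) => Fin 3)).sum_comp, Fintype.sum_prod_type]
    simp only [Fin.consEquiv, Equiv.coe_fn_mk, Pw_cons, ← Finset.mul_sum, ← ih, Vv]
    simp

lemma sum_Vv (M : Fin 3 → Fin 3 → ℝ) (n : ℕ) (y : ℕ → Fin 2) :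
    ∑ i, Vv M n y i = ∑ u : Fin (n + 1) → Fin 3, Pw M n y u := by
  rw [← (Fin.consEquiv (fun _ : Fin (n + 1) => Fin 3)).sum_comp, Fintype.sum_prod_type]
  simp only [Fin.consEquiv, Equiv.coe_fn_mk, Vv_eq]

lemma extend_block (A : Fin 3 → Fin 3 → ℕ) (hne : ∀ i, ∃ j, A i j = 1) (n : ℕ)
    (u : Fin (n + 1) → Fin 3) (hu : ∀ i : Fin n, A (u i.castSucc) (u i.succ) = 1) :
    ∃ x : ℕ → Fin 3, (∀ n : ℕ, A (x n) (x (n + 1)) = 1) ∧ ∀ i : Fin (n + 1), x i = u i := by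
  choose nx hnx using hne
  refine ⟨fun k => if h : k < n + 1 then u ⟨k, h⟩ else nx^[k - n] (u (Fin.last n)), ?_, ?_⟩
  · intro k
    rcases lt_trichotomy k n with h | h | h
    · have h1 : k < n + 1 := by omega
      have h2 : k + 1 < n + 1 := by omega
      simp only [h1, h2, dif_pos]
      exact hu ⟨k, h⟩
    · subst h
      simp only [Nat.lt_succ_self, dif_pos, lt_irrefl, dif_neg, not_false_eq_true]
      have : k + 1 - k = 1 := by omega
      rw [this]
      exact hnx _
    · have h1 : ¬ k < n + 1 := by omega
      have h2 : ¬ k + 1 < n + 1 := by omega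
      have h3 : k + 1 - n = (k - n) + 1 := by omega
      simp only [h1, h2, dif_neg, not_false_eq_true, h3, Function.iterate_succ_apply']
      exact hnx _
  · intro i
    simp [i.2]

lemma hseqC_eq (A : Fin 3 → Fin 3 → ℕ) (hA01 : ∀ i j, A i j = 0 ∨ A i j = 1)
    (hne : ∀ i, ∃ j, A i j = 1)
    (F : Fin 3 → Fin 3 → ℝ) (f : (ℕ → Fin 3) → ℝ) (n : ℕ) (y : ℕ → Fin 2) :
    hseqC {x | ∀ n : ℕ, A (x n) (x (n + 1)) = 1} projC F f (n + 2) y =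
      ∑ i, Vv (MC A F) (n + 1) y i := by
  rw [sum_Vv]
  unfold hseqC
  rw [if_neg (by omega)]
  refine Finset.sum_congr rfl fun u _ => ?_
  unfold Pw
  by_cases hy : ∀ i : Fin (n + 2), projC (u i) = y i
  · rw [Finset.prod_eq_one (s := (Finset.univ : Finset (Fin (n + 1 + 1))))
      (fun i _ => if_pos (hy i)), mul_one]
    by_cases hu : ∀ i : Fin (n + 1), A (u i.castSucc) (u i.succ) = 1
    · obtain ⟨x, hx, hxu⟩ := extend_block A hne (n + 1) u hu
      rw [if_pos ⟨⟨x, hx, hxu⟩, hy⟩, Fin.sum_univ_castSucc, Real.exp_add, Real.exp_sum]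
      have : ¬ ((Fin.last (n + 1) : Fin (n + 2)) : ℕ) + 1 < n + 2 := by simp
      rw [dif_neg this, Real.exp_zero, mul_one]
      refine Finset.prod_congr rfl fun i _ => ?_
      have h2 : ((i.castSucc : Fin (n + 2)) : ℕ) + 1 < n + 2 := by
        have := i.2
        simp only [Fin.val_castSucc]
        omega
      rw [dif_pos h2, MC, hu i]
      simp
      rfl
    · rw [if_neg]
      · push Not at hu
        obtain ⟨i, hi⟩ := hu
        symm
        apply Finset.prod_eq_zero (Finset.mem_univ i)
        have := (hA01 (u i.castSucc) (u i.succ)).resolve_right hi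
        simp [MC, this]
      · rintro ⟨⟨x, hx, hxu⟩, -⟩
        apply hu
        intro i
        rw [← hxu, ← hxu]
        exact hx i
  · rw [if_neg (fun h => hy h.2)]
    push Not at hy
    obtain ⟨i, hi⟩ := hy
    rw [Finset.prod_eq_zero (s := (Finset.univ : Finset (Fin (n + 1 + 1))))
      (Finset.mem_univ i) (if_neg hi), mul_zero]

lemma hseqC_pos (X : Set (ℕ → Fin 3)) 
    (F : Fin 3 → Fin 3 → ℝ) (f : (ℕ → Fin 3) → ℝ) (n : ℕ) (x : ℕ → Fin 3) (hx : x ∈ X) :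
    0 < hseqC X projC F f (n + 2) (projC ∘ x) := by
  unfold hseqC
  rw [if_neg (by omega)]
  refine Finset.sum_pos' (fun u _ => ?_) ⟨fun i => x i, Finset.mem_univ _, ?_⟩
  · split_ifs
    · exact (Real.exp_pos _).le
    · exact le_rfl
  · rw [if_pos ⟨⟨x, hx, fun i => rfl⟩, fun i => rfl⟩]
    exact Real.exp_pos _

lemma Vv_supp (M : Fin 3 → Fin 3 → ℝ) (n : ℕ) (y : ℕ → Fin 2) (i : Fin 3)
    (h : projC i ≠ y 0) : Vv M n y i = 0 := by
  cases n <;> simp [Vv, h]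

lemma Vv_symm (M : Fin 3 → Fin 3 → ℝ) (h11 : M 1 1 = 0) (h22 : M 2 2 = 0)
    (h12 : M 1 2 = M 2 1) (h : M 1 0 = M 2 0) (n : ℕ) (y : ℕ → Fin 2) :
    Vv M n y 1 = Vv M n y 2 := by
  have hp : (projC (1 : Fin 3)) = projC (2 : Fin 3) := by simp [projC]
  induction n generalizing y with
  | zero => simp [Vv, hp]
  | succ n ih => simp [Vv, hp, Fin.sum_univ_three, h11, h22, h12, h, ih]

/-- The constant ratio. -/
def cc (M : Fin 3 → Fin 3 → ℝ) (a b : Fin 2) : ℝ :=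
  if a = 0 then (if b = 0 then M 0 0 else (M 0 1 + M 0 2) / 2)
  else (if b = 0 then M 1 0 + M 2 0 else M 1 2)

lemma Vv_ratio (M : Fin 3 → Fin 3 → ℝ) (h11 : M 1 1 = 0) (h22 : M 2 2 = 0)
    (h12 : M 1 2 = M 2 1) (h : M 1 0 = M 2 0 ∨ M 0 1 = M 0 2) (n : ℕ) (y : ℕ → Fin 2) :
    ∑ i, Vv M (n + 1) y i = cc M (y 0) (y 1) * ∑ i, Vv M n (shift y) i := by
  have p0 : (projC (0 : Fin 3)) = 0 := by simp [projC]
  have p1 : (projC (1 : Fin 3)) = 1 := by simp [projC]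
  have p2 : (projC (2 : Fin 3)) = 1 := by simp [projC]
  have two : ∀ b : Fin 2, b = 0 ∨ b = 1 := by decide
  have s0 := Vv_supp M n (shift y) 0
  have s1 := Vv_supp M n (shift y) 1
  have s2 := Vv_supp M n (shift y) 2
  simp only [p0, p1, p2, shift, zero_add] at s0 s1 s2
  simp only [Vv, Fin.sum_univ_three, p0, p1, p2]
  rcases two (y 0) with e0 | e0 <;> rcases two (y 1) with e1 | e1 <;>
    simp only [e0, e1, ne_eq, not_true_eq_false, not_false_eq_true, zero_ne_one, one_ne_zero,
      forall_const, false_imp_iff, if_true, if_false, cc] at s0 s1 s2 ⊢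
  · change Vv M n (shift y) 1 = 0 at s1
    change Vv M n (shift y) 2 = 0 at s2
    rw [s1, s2]; ring
  · change Vv M n (shift y) 0 = 0 at s0
    rw [s0]
    rcases h with h | h
    · rw [Vv_symm M h11 h22 h12 h]; ring
    · rw [h]; ring
  · change Vv M n (shift y) 1 = 0 at s1
    change Vv M n (shift y) 2 = 0 at s2
    rw [s1, s2]; ring
  · change Vv M n (shift y) 0 = 0 at s0
    rw [s0, h11, h22, h12]; ring

/-- Lemma `exception`, continuous case: under Setting (C), if
`M_{22}|_{π^{-1}(22)} = [[0,a₁],[a₁,0]]` with `a₁ > 0` and `M_{21} = M_{31}` or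
`M_{12} = M_{13}`, then `ĥ(y) = lim log(h_n(y)/h_{n-1}(σ_Y y))` exists at every `y ∈ Y`
and is continuous on `Y`. (Symbols `1,2,3` of the paper are `0,1,2` here, and symbols
`1,2` of `Y` are `0,1`.) -/
theorem stmt_11
    (A : Fin 3 → Fin 3 → ℕ) (hA01 : ∀ i j, A i j = 0 ∨ A i j = 1)
    (X : Set (ℕ → Fin 3)) (hXdef : X = {x | ∀ n : ℕ, A (x n) (x (n + 1)) = 1})
    (hXirr : IrreducibleShift X)
    (Y : Set (ℕ → Fin 2))
    (hYdef : Y = Set.univ ∨ Y = {y | ∀ n : ℕ, ¬(y n = 0 ∧ y (n + 1) = 0)})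
    (hYirr : IrreducibleShift Y)
    (hsurj : (fun x => (projC (l := 3)) ∘ x) '' X = Y)
    (F : Fin 3 → Fin 3 → ℝ) (f : (ℕ → Fin 3) → ℝ)
    (hf : ∀ x : ℕ → Fin 3, f x = F (x 0) (x 1))
    (a₁ : ℝ) (ha₁ : 0 < a₁)
    (hMsub : (Matrix.of fun i j : Fin 2 => MC A F i.succ j.succ) = !![(0 : ℝ), a₁; a₁, 0])
    (hcond : MC A F 1 0 = MC A F 2 0 ∨ MC A F 0 1 = MC A F 0 2) :
    ∃ hhat : (ℕ → Fin 2) → ℝ,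
      (∀ y ∈ Y, Tendsto (fun n : ℕ =>
        Real.log (hseqC X projC F f (n + 2) y / hseqC X projC F f (n + 1) (shift y)))
        atTop (𝓝 (hhat y))) ∧
      ContinuousOn hhat Y := by
  have e := fun i j => congrFun (congrFun hMsub i) j
  have h11 : MC A F 1 1 = 0 := by simpa using e 0 0
  have h22 : MC A F 2 2 = 0 := by simpa using e 1 1
  have h12 : MC A F 1 2 = a₁ := by simpa using e 0 1
  have h21 : MC A F 2 1 = a₁ := by simpa using e 1 0
  have hne : ∀ i, ∃ j, A i j = 1 := by
    have key : ∀ i j, MC A F i j = a₁ → A i j = 1 := by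
      intro i j h
      refine (hA01 i j).resolve_left fun h0 => ?_
      simp [MC, h0] at h
      exact ha₁.ne h
    have hy0 : (fun n : ℕ => if n = 0 then (0 : Fin 2) else 1) ∈ Y := by
      rcases hYdef with h | h
      · rw [h]; trivial
      · rw [h]; intro n; simp
    rw [← hsurj] at hy0
    obtain ⟨x, hx, hxy⟩ := hy0
    have hx0 : x 0 = 0 := by
      have := congrFun hxy 0
      simp only [Function.comp, projC, if_true] at this
      by_contra hc
      have h' : ((x 0 : Fin 3) : ℕ) ≠ 0 := fun h => hc (Fin.ext h)
      simp [hc] at this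
    rw [hXdef] at hx
    intro i
    fin_cases i
    · exact ⟨x 1, by have := hx 0; rw [hx0] at this; exact this⟩
    · exact ⟨2, key _ _ h12⟩
    · exact ⟨1, key _ _ h21⟩
  refine ⟨fun y => Real.log (cc (MC A F) (y 0) (y 1)), ?_, ?_⟩
  · intro y hy
    refine tendsto_const_nhds.congr' ?_
    filter_upwards [eventually_ge_atTop 1] with n hn
    obtain ⟨m, rfl⟩ : ∃ m, n = m + 1 := ⟨n - 1, by omega⟩
    rw [← hsurj] at hy
    obtain ⟨x, hx, rfl⟩ := hy
    have hsx : shift x ∈ X := by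
      rw [hXdef] at hx ⊢
      exact fun n => hx (n + 1)
    have hpos := hseqC_pos X F f m (shift x) hsx
    have hs : shift ((projC (l := 3)) ∘ x) = projC ∘ shift x := rfl
    have h1 : hseqC X projC F f (m + 1 + 2) (projC ∘ x) =
        cc (MC A F) ((projC ∘ x) 0) ((projC ∘ x) 1) *
          hseqC X projC F f (m + 1 + 1) (shift (projC ∘ x)) := by
      rw [hXdef, hseqC_eq A hA01 hne, hseqC_eq A hA01 hne]
      exact Vv_ratio _ h11 h22 (h12.trans h21.symm) hcond _ _
    beta_reduce
    rw [h1, hs, mul_div_cancel_right₀ _ hpos.ne']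
  · have : Continuous fun y : ℕ → Fin 2 => Real.log (cc (MC A F) (y 0) (y 1)) := by
      have h : Continuous fun p : Fin 2 × Fin 2 => Real.log (cc (MC A F) p.1 p.2) :=
        continuous_of_discreteTopology
      have g : Continuous fun y : ℕ → Fin 2 => (y 0, y 1) := by fun_prop
      exact h.comp g
    exact this.continuousOn
end
end

section
/- Let M be a 2×2 real matrix with nonnegative entries such that s(M^n) > 0 for every n ≥ 1, where s(N) denotes the sum of all entries of a matrix N. If M is similar over ℝ to the Jordan block [[α, 1],[0, α]] for some α ∈ ℝ, then α > 0 and lim_{n→∞} s(M^{n+1})/s(M^n) = α. -/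
open Filter Topology

/-- Lemma `2inf` (1): if a nonnegative `2 × 2` real matrix `M` with
`s(M^n) > 0` for all `n ≥ 1` is similar over `ℝ` to the Jordan block `[[α,1],[0,α]]`,
then `α > 0` and `s(M^{n+1})/s(M^n) → α`, where `s` is the sum of all entries. -/
theorem stmt_13 (M : Matrix (Fin 2) (Fin 2) ℝ)
    (hM : ∀ i j, 0 ≤ M i j)
    (hs : ∀ n : ℕ, 1 ≤ n → 0 < ∑ i : Fin 2, ∑ j : Fin 2, (M ^ n) i j)
    (α : ℝ)
    (hsim : ∃ P : Matrix (Fin 2) (Fin 2) ℝ, IsUnit P.det ∧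
      !![α, 1; 0, α] = P⁻¹ * M * P) :
    0 < α ∧
    Tendsto (fun n : ℕ =>
        (∑ i : Fin 2, ∑ j : Fin 2, (M ^ (n + 1)) i j) /
          (∑ i : Fin 2, ∑ j : Fin 2, (M ^ n) i j)) atTop (𝓝 α) := by
  obtain ⟨P, hP, hJ⟩ := hsim
  have hPi : P * P⁻¹ = 1 := Matrix.mul_nonsing_inv P hP
  have hiP : P⁻¹ * P = 1 := Matrix.nonsing_inv_mul P hP
  have htr : M 0 0 + M 1 1 = 2 * α := by
    have h1 : (P⁻¹ * M * P).trace = M.trace := by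
      rw [Matrix.trace_mul_comm, ← mul_assoc, hPi, one_mul]
    rw [← hJ] at h1
    simp [Matrix.trace, Fin.sum_univ_two] at h1
    linarith
  have hdet : M 0 0 * M 1 1 - M 0 1 * M 1 0 = α ^ 2 := by
    have h1 : (P⁻¹ * M * P).det = M.det := by
      rw [Matrix.det_mul_comm, ← mul_assoc, hPi, one_mul]
    rw [← hJ, Matrix.det_fin_two, Matrix.det_fin_two] at h1
    simp at h1
    linarith
  have hsq : M * M = (2 * α) • M - (α ^ 2) • (1 : Matrix (Fin 2) (Fin 2) ℝ) := by
    rw [← htr, ← hdet]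
    ext i j
    fin_cases i <;> fin_cases j <;> simp [Matrix.mul_apply, Fin.sum_univ_two] <;> ring
  have hα : 0 < α := by
    have h0 : 0 ≤ α := by linarith [hM 0 0, hM 1 1]
    rcases h0.lt_or_eq with h | h
    · exact h
    · exfalso
      have h2 := hs 2 (by norm_num)
      rw [pow_two, hsq, ← h] at h2
      simp at h2
  refine ⟨hα, ?_⟩
  have hpow : ∀ n : ℕ, α • M ^ n = (α ^ n) • ((n : ℝ) • M + (α - n * α) • (1 : Matrix (Fin 2) (Fin 2) ℝ)) := by
    intro n
    induction n with
    | zero => simp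
    | succ k ih =>
      rw [pow_succ, ← smul_mul_assoc, ih, smul_mul_assoc, add_mul, smul_mul_assoc, smul_mul_assoc,
        hsq, one_mul]
      push_cast
      module
  obtain ⟨t, ht⟩ : ∃ t, t = M 0 1 + M 1 0 := ⟨_, rfl⟩
  have ht0 : 0 ≤ t := by rw [ht]; exact add_nonneg (hM _ _) (hM _ _)
  have hsum : ∀ n : ℕ, (∑ i : Fin 2, ∑ j : Fin 2, (M ^ n) i j) = α ^ n * (2 * α + n * t) / α := by
    intro n
    rw [eq_div_iff hα.ne']
    have e := fun i j => congrFun (congrFun (hpow n) i) j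
    have e00 := e 0 0
    have e01 := e 0 1
    have e10 := e 1 0
    have e11 := e 1 1
    simp at e00 e01 e10 e11
    simp only [Fin.sum_univ_two]
    rw [ht]
    linear_combination e00 + e01 + e10 + e11 + α ^ n * n * htr
  have hlim : Tendsto (fun n : ℕ => α + α * (t / (2 * α + n * t))) atTop (𝓝 α) := by
    have h1 : Tendsto (fun n : ℕ => t / (2 * α + n * t)) atTop (𝓝 0) := by
      rcases ht0.lt_or_eq with h | h
      · exact Tendsto.const_div_atTop (tendsto_atTop_add_const_left _ _
          (tendsto_natCast_atTop_atTop.atTop_mul_const h)) _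
      · simp [← h]
    simpa using (h1.const_mul α).const_add α
  refine hlim.congr fun n => ?_
  rw [hsum, hsum]
  have hd : 0 < 2 * α + n * t := by positivity
  push_cast
  field_simp
  ring
end

section
/- Let M be a 2×2 real matrix with nonnegative entries such that s(M^n) > 0 for every n ≥ 1, where s(N) denotes the sum of all entries of a matrix N. If M is similar over ℝ to the diagonal matrix diag(α, β) for real numbers α, β with β ≠ −α, then (α, β) ≠ (0, 0) and the limit lim_{n→∞} s(M^{n+1})/s(M^n) exists and is a positive real number. -/
open Filter Topology

theorem aux_lt (a b α β : ℝ) (h : |β| < |α|) (f : ℕ → ℝ)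
    (hf : ∀ n, f n = a * α ^ n + b * β ^ n) (hp : ∀ n, 1 ≤ n → 0 < f n) :
    ∃ L : ℝ, 0 < L ∧ Tendsto (fun n => f (n + 1) / f n) atTop (𝓝 L) := by
  have hα : α ≠ 0 := by
    rintro rfl
    simp at h
    linarith [abs_nonneg β]
  by_cases ha : a = 0
  · subst ha
    have h1 := hp 1 le_rfl
    have h2 := hp 2 (by norm_num)
    rw [hf] at h1 h2
    simp only [zero_mul, zero_add, pow_one] at h1 h2
    have hb : 0 < b := by
      by_contra hb
      nlinarith [sq_nonneg β]
    have hβ : 0 < β := pos_of_mul_pos_right h1 hb.le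
    refine ⟨β, hβ, tendsto_const_nhds.congr fun n => ?_⟩
    rw [hf, hf]
    have : β ^ n ≠ 0 := by positivity
    field_simp
    ring
  · have hr : Tendsto (fun n : ℕ => (β / α) ^ n) atTop (𝓝 0) := by
      apply tendsto_pow_atTop_nhds_zero_of_abs_lt_one
      rw [abs_div, div_lt_one (abs_pos.mpr hα)]
      exact h
    have key : Tendsto (fun n => f (n + 1) / f n) atTop (𝓝 α) := by
      have h1 : Tendsto (fun n : ℕ => (a * α + b * β * (β / α) ^ n) / (a + b * (β / α) ^ n))
          atTop (𝓝 ((a * α + b * β * 0) / (a + b * 0))) :=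
        ((hr.const_mul _).const_add _).div ((hr.const_mul _).const_add _) (by simpa using ha)
      have h2 : (a * α + b * β * 0) / (a + b * 0) = α := by
        simp only [mul_zero, add_zero]
        exact mul_div_cancel_left₀ α ha
      rw [h2] at h1
      refine h1.congr fun n => ?_
      have hn : α ^ n ≠ 0 := pow_ne_zero _ hα
      rw [← mul_div_mul_right _ _ hn, hf, hf, div_pow]
      congr 1
      · field_simp
        ring
      · field_simp
    have h0 : 0 ≤ α := by
      refine ge_of_tendsto key ?_
      filter_upwards [eventually_ge_atTop 1] with n hn
      exact (div_pos (hp _ (by omega)) (hp _ hn)).le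
    exact ⟨α, lt_of_le_of_ne h0 hα.symm, key⟩

theorem aux_pow (M P : Matrix (Fin 2) (Fin 2) ℝ) (α β : ℝ) (hP : IsUnit P.det)
    (h : !![α, 0; 0, β] = P⁻¹ * M * P) (n : ℕ) :
    M ^ n = P * !![α ^ n, 0; 0, β ^ n] * P⁻¹ := by
  have h1 : P * P⁻¹ = 1 := Matrix.mul_nonsing_inv P hP
  have h2 : P⁻¹ * P = 1 := Matrix.nonsing_inv_mul P hP
  have hM : M = P * !![α, 0; 0, β] * P⁻¹ := by
    rw [h]
    calc M = (P * P⁻¹) * M * (P * P⁻¹) := by rw [h1]; simp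
      _ = _ := by simp only [Matrix.mul_assoc]
  induction n with
  | zero =>
    have : !![(1 : ℝ), 0; 0, 1] = 1 := by
      ext i j; fin_cases i <;> fin_cases j <;> simp
    simp [this, h1]
  | succ n ih =>
    have hd : !![α ^ (n+1), 0; 0, β ^ (n+1)] = !![α ^ n, 0; 0, β ^ n] * !![α, 0; 0, β] := by
      simp [Matrix.mul_fin_two, pow_succ]
    rw [pow_succ, ih, hd]
    rw [hM]
    calc _ = P * !![α ^ n, 0; 0, β ^ n] * (P⁻¹ * P) * !![α, 0; 0, β] * P⁻¹ := by
          simp only [Matrix.mul_assoc]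
      _ = _ := by rw [h2]; simp only [Matrix.mul_assoc, Matrix.one_mul]

/-- Lemma `2inf` (2): if a nonnegative `2 × 2` real matrix `M` with
`s(M^n) > 0` for all `n ≥ 1` is similar over `ℝ` to `diag(α, β)` with `β ≠ −α`, then
`(α, β) ≠ (0, 0)` and `s(M^{n+1})/s(M^n)` converges to a positive real number, where `s`
is the sum of all entries. -/
theorem stmt_14 (M : Matrix (Fin 2) (Fin 2) ℝ)
    (hM : ∀ i j, 0 ≤ M i j)
    (hs : ∀ n : ℕ, 1 ≤ n → 0 < ∑ i : Fin 2, ∑ j : Fin 2, (M ^ n) i j)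
    (α β : ℝ) (hβ : β ≠ -α)
    (hsim : ∃ P : Matrix (Fin 2) (Fin 2) ℝ, IsUnit P.det ∧
      !![α, 0; 0, β] = P⁻¹ * M * P) :
    ¬(α = 0 ∧ β = 0) ∧
    ∃ L : ℝ, 0 < L ∧
      Tendsto (fun n : ℕ =>
          (∑ i : Fin 2, ∑ j : Fin 2, (M ^ (n + 1)) i j) /
            (∑ i : Fin 2, ∑ j : Fin 2, (M ^ n) i j)) atTop (𝓝 L) := by
  refine ⟨fun h => hβ (by simp [h.1, h.2]), ?_⟩
  obtain ⟨P, hP, h⟩ := hsim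
  have hpow := aux_pow M P α β hP h
  obtain ⟨a, b, hab⟩ : ∃ a b : ℝ, ∀ n : ℕ,
      (∑ i : Fin 2, ∑ j : Fin 2, (M ^ n) i j) = a * α ^ n + b * β ^ n := by
    refine ⟨(P 0 0 + P 1 0) * (P⁻¹ 0 0 + P⁻¹ 0 1), (P 0 1 + P 1 1) * (P⁻¹ 1 0 + P⁻¹ 1 1),
      fun n => ?_⟩
    rw [hpow n]
    generalize P⁻¹ = Q
    simp [Matrix.mul_apply, Fin.sum_univ_two]
    ring
  rcases lt_trichotomy |β| |α| with hlt | heq | hgt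
  · exact aux_lt a b α β hlt (fun n => ∑ i : Fin 2, ∑ j : Fin 2, (M ^ n) i j) hab hs
  · have hE : β = α := (abs_eq_abs.mp heq).resolve_right hβ
    subst hE
    have hβ0 : β ≠ 0 := by
      rintro rfl
      simp at hβ
    refine aux_lt (a + b) 0 β 0 (by simpa using hβ0)
      (fun n => ∑ i : Fin 2, ∑ j : Fin 2, (M ^ n) i j) (fun n => ?_) hs
    rw [hab n]
    ring
  · exact aux_lt b a β α hgt (fun n => ∑ i : Fin 2, ∑ j : Fin 2, (M ^ n) i j)
      (fun n => by rw [hab n]; ring) hs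
end
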